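/- There exist constants ν₀ ∈ (0,1], C₁ > 0, C₂ ∈ (C₁ν₀, 1) and, for each p ≥ 0, constants c(p), C(p) > 0, all depending only on f and D (and p), such that for every ν ∈ (0,ν₀] and every ℓ in the inertial range J₂ = (C₁ν, C₂], the structure function satisfies c(p) ℓ^p ≤ S_p(ℓ) ≤ C(p) ℓ^p if 0 ≤ p ≤ 1, and c(p) ℓ ≤ S_p(ℓ) ≤ C(p) ℓ if p ≥ 1; moreover for ℓ in the dissipation range J₁ = (0, C₁ν], c(p) ℓ^p ≤ S_p(ℓ) ≤ C(p) ℓ^p if 0 ≤ p ≤ 1 and c(p) ℓ^p ν^{−(p−1)} ≤ S_p(ℓ) ≤ C(p) ℓ^p ν^{−(p−1)} if p ≥ 1. -/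

import Mathlib

open MeasureTheory Set
open scoped ENNReal

/-- The `L^p` norm (on the circle, i.e. over one period `(0,1]`) of the `m`-th
derivative of a function `v : ℝ → ℝ` (identified with a function on `S¹ = ℝ/ℤ`). -/
noncomputable def sobLp (m : ℕ) (p : ℝ≥0∞) (v : ℝ → ℝ) : ℝ :=
  (eLpNorm (iteratedDeriv m v) p (volume.restrict (Ioc (0:ℝ) 1))).toReal

/-- `u` is a smooth, space-periodic, zero-mean-value solution of the generalised
Burgers equation `u_t + f'(u) u_x - ν u_xx = 0` with strongly convex `f` and
nonzero initial condition. -/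
structure IsBurgersSolution (f : ℝ → ℝ) (σ ν : ℝ) (u : ℝ → ℝ → ℝ) : Prop where
  hf : ContDiff ℝ (⊤ : ℕ∞) f
  hσ : 0 < σ
  hconv : ∀ y, σ ≤ iteratedDeriv 2 f y
  hν : 0 < ν
  hu : ContDiffOn ℝ (⊤ : ℕ∞) (Function.uncurry u) (Ici (0:ℝ) ×ˢ univ)
  hper : ∀ t x, u t (x + 1) = u t x
  hpde : ∀ t, 0 < t → ∀ x,
    deriv (fun s => u s x) t + deriv f (u t x) * deriv (u t) x
      - ν * deriv (deriv (u t)) x = 0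
  hmean : ∀ t, 0 ≤ t → ∫ x in Ioc (0:ℝ) 1, u t x = 0
  hinit : ∃ x, u 0 x ≠ 0

/-- The quantity `D = max(|u₀|₁⁻¹, |u₀|_{1,∞})`. -/
noncomputable def burgersD (u : ℝ → ℝ → ℝ) : ℝ :=
  max (sobLp 0 1 (u 0))⁻¹ (sobLp 1 ⊤ (u 0))

/-- `T₁ = D⁻² C̃⁻¹ / 4`. -/
noncomputable def burgersT₁ (D Ct : ℝ) : ℝ := (D ^ 2)⁻¹ * Ct⁻¹ / 4

/-- `T₂ = max(3T₁/2, 2Dσ⁻¹)`. -/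
noncomputable def burgersT₂ (σ D Ct : ℝ) : ℝ :=
  max (3 / 2 * burgersT₁ D Ct) (2 * D * σ⁻¹)

/-- Time average over `[T₁, T₂]`. -/
noncomputable def timeAvg (T₁ T₂ : ℝ) (A : ℝ → ℝ) : ℝ :=
  (T₂ - T₁)⁻¹ * ∫ t in T₁..T₂, A t

/-- The structure function `S_p(ℓ)`. -/
noncomputable def structFun (T₁ T₂ : ℝ) (u : ℝ → ℝ → ℝ) (p ℓ : ℝ) : ℝ :=
  timeAvg T₁ T₂ (fun t => ∫ x in Ioc (0:ℝ) 1, |u t (x + ℓ) - u t x| ^ p)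

/-! ### Space-time averages -/

noncomputable def stAvg (T₁ T₂ : ℝ) (h : ℝ → ℝ → ℝ) : ℝ :=
  (T₂ - T₁)⁻¹ * ∫ t in T₁..T₂, ∫ x in (0:ℝ)..1, h t x

lemma stAvg_cont_inner {h : ℝ → ℝ → ℝ} (hh : Continuous (Function.uncurry h)) :
    Continuous (fun t => ∫ x in (0:ℝ)..1, h t x) :=
  intervalIntegral.continuous_parametric_intervalIntegral_of_continuous' hh 0 1

lemma cont_slice {h : ℝ → ℝ → ℝ} (hh : Continuous (Function.uncurry h)) (t : ℝ) :
    Continuous (h t) := hh.comp (by fun_prop : Continuous fun x : ℝ => (t, x))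

lemma stAvg_mono {T₁ T₂ : ℝ} (hT : T₁ < T₂) {h k : ℝ → ℝ → ℝ}
    (hh : Continuous (Function.uncurry h)) (hk : Continuous (Function.uncurry k))
    (hle : ∀ t ∈ Icc T₁ T₂, ∀ x, h t x ≤ k t x) :
    stAvg T₁ T₂ h ≤ stAvg T₁ T₂ k := by
  unfold stAvg
  have h1 : 0 ≤ (T₂ - T₁)⁻¹ := inv_nonneg.2 (by linarith)
  refine mul_le_mul_of_nonneg_left ?_ h1
  refine intervalIntegral.integral_mono_on hT.le
    ((stAvg_cont_inner hh).intervalIntegrable _ _)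
    ((stAvg_cont_inner hk).intervalIntegrable _ _) ?_
  intro t ht
  refine intervalIntegral.integral_mono_on zero_le_one
    ((cont_slice hh t).intervalIntegrable _ _)
    ((cont_slice hk t).intervalIntegrable _ _) ?_
  intro x _
  exact hle t ht x

lemma stAvg_add (T₁ T₂ : ℝ) {h k : ℝ → ℝ → ℝ}
    (hh : Continuous (Function.uncurry h)) (hk : Continuous (Function.uncurry k)) :
    stAvg T₁ T₂ (fun t x => h t x + k t x) = stAvg T₁ T₂ h + stAvg T₁ T₂ k := by
  unfold stAvg
  rw [← mul_add, ← intervalIntegral.integral_add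
    ((stAvg_cont_inner hh).intervalIntegrable _ _)
    ((stAvg_cont_inner hk).intervalIntegrable _ _)]
  congr 2
  funext t
  rw [intervalIntegral.integral_add
    ((cont_slice hh t).intervalIntegrable _ _)
    ((cont_slice hk t).intervalIntegrable _ _)]

lemma stAvg_smul (T₁ T₂ c : ℝ) (h : ℝ → ℝ → ℝ) :
    stAvg T₁ T₂ (fun t x => c * h t x) = c * stAvg T₁ T₂ h := by
  unfold stAvg
  simp only [intervalIntegral.integral_const_mul]
  ring

lemma stAvg_const {T₁ T₂ : ℝ} (hT : T₁ < T₂) (c : ℝ) :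
    stAvg T₁ T₂ (fun _ _ => c) = c := by
  unfold stAvg
  have : T₂ - T₁ ≠ 0 := by linarith
  simp
  field_simp

/-- The core real-variable estimate: everything follows from a second moment bound. -/
lemma core_bounds {D κ p : ℝ} (hD : 0 < D) (hκ : 0 < κ) (hp : 0 ≤ p) :
    ∃ c > 0, ∃ C > 0, ∀ T₁ T₂ : ℝ, T₁ < T₂ → ∀ δ : ℝ → ℝ → ℝ,
      Continuous (Function.uncurry δ) → ∀ ℓ M : ℝ, 0 < ℓ → 0 < M →
      (∀ t ∈ Icc T₁ T₂, ∀ x, δ t x ≤ D * ℓ) → (∀ t ∈ Icc T₁ T₂, ∀ x, |δ t x| ≤ M) →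
      stAvg T₁ T₂ δ = 0 → κ * ℓ * M ≤ stAvg T₁ T₂ (fun t x => δ t x ^ 2) →
      (p ≤ 1 → c * ℓ ^ p ≤ stAvg T₁ T₂ (fun t x => |δ t x| ^ p) ∧
        stAvg T₁ T₂ (fun t x => |δ t x| ^ p) ≤ C * ℓ ^ p) ∧
      (1 ≤ p → c * (ℓ * M ^ (p - 1)) ≤ stAvg T₁ T₂ (fun t x => |δ t x| ^ p) ∧
        stAvg T₁ T₂ (fun t x => |δ t x| ^ p) ≤ C * (ℓ * M ^ (p - 1))) := by
  set c1 := κ / 2 * D ^ (p - 1) with hc1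
  set c2 := (κ / 2) / (1 + (κ / (4 * D)) ^ (2 - p)) with hc2
  have hc1p : 0 < c1 := by positivity
  have hc2p : 0 < c2 := by positivity
  refine ⟨min c1 c2, lt_min hc1p hc2p, 1 + 2 * D, by positivity, ?_⟩
  intro T₁ T₂ hT δ hδ ℓ M hℓ hM hup habs h0 h2
  have hδa : Continuous (Function.uncurry fun t x => |δ t x|) := hδ.abs
  have hδp : Continuous (Function.uncurry fun t x => |δ t x| ^ p) :=
    hδ.abs.rpow_const (fun _ => Or.inr hp)
  have hδ2 : Continuous (Function.uncurry fun t x => δ t x ^ 2) := hδ.pow 2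
  set S := stAvg T₁ T₂ (fun t x => |δ t x| ^ p) with hS
  set S1 := stAvg T₁ T₂ (fun t x => |δ t x|) with hS1
  have hδc : ∀ c : ℝ, Continuous (Function.uncurry fun t x => c * δ t x) :=
    fun c => continuous_const.mul hδ
  have cc : ∀ c : ℝ, Continuous (Function.uncurry fun _ _ : ℝ => c) := fun c => continuous_const
  -- first moment upper bound
  have hS1u : S1 ≤ 2 * D * ℓ := by
    have hk : Continuous (Function.uncurry fun t x => 2 * D * ℓ + (-1) * δ t x) :=
      continuous_const.add (continuous_const.mul hδ)
    have hm := stAvg_mono hT hδa hk (fun t ht x => by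
      have := hup t ht x
      rcases abs_cases (δ t x) with h | h <;> nlinarith)
    rw [stAvg_add T₁ T₂ (h := fun _ _ => 2 * D * ℓ) (k := fun t x => (-1) * δ t x) (cc _)
      (hδc _), stAvg_const hT, stAvg_smul, h0] at hm
    linarith
  have hS1l : κ * ℓ ≤ S1 := by
    have hk : Continuous (Function.uncurry fun t x => M * |δ t x|) := continuous_const.mul hδa
    have hm := stAvg_mono hT hδ2 hk (fun t ht x => by
      have := habs t ht x
      rw [← sq_abs]
      nlinarith [abs_nonneg (δ t x)])
    rw [stAvg_smul] at hm
    have : M * (κ * ℓ) ≤ M * S1 := by linarith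
    exact le_of_mul_le_mul_left this hM
  constructor
  · intro hp1
    constructor
    · have hk : Continuous (Function.uncurry fun t x => (D * ℓ) ^ (1 - p) * |δ t x| ^ p) :=
        continuous_const.mul hδp
      have hj : Continuous (Function.uncurry fun t x => (1 / 2) * |δ t x| + (1 / 2) * δ t x) :=
        (continuous_const.mul hδa).add (continuous_const.mul hδ)
      have hm := stAvg_mono hT hj hk (fun t ht x => by
        have h1 := hup t ht x
        rcases le_or_gt (δ t x) 0 with h | h
        · rw [abs_of_nonpos h]
          have : 0 ≤ (D * ℓ) ^ (1 - p) * (-δ t x) ^ p := by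
            have : 0 ≤ -δ t x := by linarith
            positivity
          linarith
        · rw [abs_of_pos h]
          calc 1 / 2 * δ t x + 1 / 2 * δ t x = δ t x ^ (1 - p) * δ t x ^ p := by
                rw [← Real.rpow_add h]; simp; ring
            _ ≤ _ := by
                have := Real.rpow_le_rpow h.le h1 (by linarith : 0 ≤ 1 - p)
                have : 0 ≤ δ t x ^ p := by positivity
                gcongr)
      rw [stAvg_add T₁ T₂ (h := fun t x => (1 / 2) * |δ t x|) (k := fun t x => (1 / 2) * δ t x)
        (continuous_const.mul hδa) (hδc _), stAvg_smul, stAvg_smul, stAvg_smul,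
        h0] at hm
      have h3 : κ / 2 * ℓ ≤ (D * ℓ) ^ (1 - p) * S := by
        have : κ / 2 * ℓ ≤ 1 / 2 * S1 := by linarith
        linarith
      have h4 : (D * ℓ) ^ (p - 1) * (κ / 2 * ℓ) ≤ (D * ℓ) ^ (p - 1) * ((D * ℓ) ^ (1 - p) * S) := by
        gcongr
      rw [← mul_assoc, ← mul_assoc, ← Real.rpow_add (by positivity)] at h4
      simp only [sub_add_sub_cancel, sub_self, Real.rpow_zero, one_mul] at h4
      have h5 : c1 * ℓ ^ p = (D * ℓ) ^ (p - 1) * (κ / 2) * ℓ := by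
        rw [hc1, Real.mul_rpow hD.le hℓ.le, Real.rpow_sub_one hℓ.ne']
        field_simp
      calc min c1 c2 * ℓ ^ p ≤ c1 * ℓ ^ p := by gcongr; exact min_le_left _ _
        _ ≤ S := by rw [h5]; linarith
    · have hk : Continuous (Function.uncurry fun t x => ℓ ^ p + ℓ ^ (p - 1) * |δ t x|) :=
        continuous_const.add (continuous_const.mul hδa)
      have hm := stAvg_mono hT hδp hk (fun t ht x => by
        have hy := abs_nonneg (δ t x)
        set y := |δ t x|
        rcases le_or_gt y ℓ with h | h
        · have := Real.rpow_le_rpow hy h hp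
          have : 0 ≤ ℓ ^ (p - 1) * y := by positivity
          linarith
        · have h1 : y ^ (p - 1) ≤ ℓ ^ (p - 1) :=
            Real.rpow_le_rpow_of_nonpos hℓ h.le (by linarith)
          have hy' : 0 < y := hℓ.trans h
          have h2 : y ^ p = y ^ (p - 1) * y := by
            rw [Real.rpow_sub_one hy'.ne']; field_simp
          rw [h2]
          have : 0 ≤ ℓ ^ p := by positivity
          nlinarith)
      rw [stAvg_add T₁ T₂ (h := fun _ _ => ℓ ^ p) (k := fun t x => ℓ ^ (p - 1) * |δ t x|) (cc _)
        (continuous_const.mul hδa), stAvg_const hT, stAvg_smul] at hm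
      have h3 : ℓ ^ (p - 1) * S1 ≤ ℓ ^ (p - 1) * (2 * D * ℓ) := by gcongr
      have h5 : ℓ ^ (p - 1) * (2 * D * ℓ) = 2 * D * ℓ ^ p := by
        rw [Real.rpow_sub_one hℓ.ne']; field_simp
      linarith
  · intro hp1
    constructor
    · set lam := κ / (4 * D) * M with hlam
      have hlamp : 0 < lam := by positivity
      set B := lam ^ (2 - p) + M ^ (2 - p) with hB
      have hBp : 0 < B := by positivity
      have hk : Continuous (Function.uncurry fun t x => lam * |δ t x| + B * |δ t x| ^ p) :=
        (continuous_const.mul hδa).add (continuous_const.mul hδp)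
      have hm := stAvg_mono hT hδ2 hk (fun t ht x => by
        rw [← sq_abs]
        have hyM := habs t ht x
        have hy := abs_nonneg (δ t x)
        set y := |δ t x|
        rcases le_or_gt y lam with h | h
        · have : 0 ≤ B * y ^ p := by positivity
          nlinarith
        · have hy' : 0 < y := hlamp.trans h
          have h2 : y ^ 2 = y ^ (2 - p) * y ^ p := by
            rw [← Real.rpow_add hy']; simp
          have h3 : y ^ (2 - p) ≤ B := by
            rcases le_or_gt p 2 with h4 | h4
            · have := Real.rpow_le_rpow hy hyM (by linarith : 0 ≤ 2 - p)
              have : 0 ≤ lam ^ (2 - p) := by positivity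
              linarith
            · have := Real.rpow_le_rpow_of_nonpos hlamp h.le (by linarith : 2 - p ≤ 0)
              have : 0 ≤ M ^ (2 - p) := by positivity
              linarith
          have h4 : 0 ≤ y ^ p := by positivity
          have h5 : 0 ≤ lam * y := by positivity
          rw [h2]
          nlinarith)
      rw [stAvg_add T₁ T₂ (h := fun t x => lam * |δ t x|) (k := fun t x => B * |δ t x| ^ p)
        (continuous_const.mul hδa) (continuous_const.mul hδp), stAvg_smul, stAvg_smul] at hm
      have h3 : lam * S1 ≤ κ / 2 * ℓ * M := by
        calc lam * S1 ≤ lam * (2 * D * ℓ) := by gcongr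
          _ = κ / 2 * ℓ * M := by rw [hlam]; field_simp; ring
      have h4 : κ / 2 * ℓ * M ≤ B * S := by linarith
      have h5 : B = M ^ (2 - p) * (1 + (κ / (4 * D)) ^ (2 - p)) := by
        rw [hB, hlam, Real.mul_rpow (by positivity) hM.le]; ring
      have h6 : B * (c2 * (ℓ * M ^ (p - 1))) = κ / 2 * ℓ * M := by
        rw [h5, hc2]
        have h7 : M ^ (2 - p) * M ^ (p - 1) = M := by
          rw [← Real.rpow_add hM]; norm_num
        have h8 : (1 + (κ / (4 * D)) ^ (2 - p)) ≠ 0 := by positivity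
        calc _ = (M ^ (2 - p) * M ^ (p - 1)) * ((1 + (κ / (4 * D)) ^ (2 - p)) /
              (1 + (κ / (4 * D)) ^ (2 - p))) * (κ / 2 * ℓ) := by ring
          _ = _ := by rw [h7, div_self h8]; ring
      calc min c1 c2 * (ℓ * M ^ (p - 1)) ≤ c2 * (ℓ * M ^ (p - 1)) := by
            gcongr; exact min_le_right _ _
        _ ≤ S := by
            refine le_of_mul_le_mul_left ?_ hBp
            linarith
    · have hk : Continuous (Function.uncurry fun t x => M ^ (p - 1) * |δ t x|) :=
        continuous_const.mul hδa
      have hm := stAvg_mono hT hδp hk (fun t ht x => by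
        have hyM := habs t ht x
        have hy := abs_nonneg (δ t x)
        set y := |δ t x|
        rcases hy.eq_or_lt with h | h
        · rw [← h, Real.zero_rpow (by linarith)]; simp
        · have h2 : y ^ p = y ^ (p - 1) * y := by
            rw [Real.rpow_sub_one h.ne']; field_simp
          rw [h2]
          have := Real.rpow_le_rpow hy hyM (by linarith : 0 ≤ p - 1)
          gcongr)
      rw [stAvg_smul] at hm
      have hMp : 0 < M ^ (p - 1) := by positivity
      have h3 : M ^ (p - 1) * S1 ≤ M ^ (p - 1) * (2 * D * ℓ) := by gcongr
      have h4 : 0 < ℓ * M ^ (p - 1) := by positivity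
      nlinarith

/-! ### Smoothness of partial derivatives -/

lemma uniqueDiff_half : UniqueDiffOn ℝ (Ici (0:ℝ) ×ˢ (univ : Set ℝ)) :=
  (uniqueDiffOn_Ici 0).prod uniqueDiffOn_univ

lemma hasDerivAt_slice {w : ℝ → ℝ → ℝ}
    (hw : ContDiffOn ℝ (⊤ : ℕ∞) (Function.uncurry w) (Ici (0:ℝ) ×ˢ univ)) {t : ℝ} (ht : 0 ≤ t)
    (x : ℝ) : HasDerivAt (w t)
      (fderivWithin ℝ (Function.uncurry w) (Ici (0:ℝ) ×ˢ univ) (t, x) (0, 1)) x := by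
  have h1 : HasFDerivWithinAt (Function.uncurry w)
      (fderivWithin ℝ (Function.uncurry w) (Ici (0:ℝ) ×ˢ univ) (t, x))
      (Ici (0:ℝ) ×ˢ univ) (t, x) :=
    ((hw.differentiableOn (by simp)) (t, x) ⟨ht, mem_univ _⟩).hasFDerivWithinAt
  have h2 : HasDerivAt (fun y : ℝ => (t, y)) ((0:ℝ), (1:ℝ)) x :=
    (hasDerivAt_const x t).prodMk (hasDerivAt_id x)
  have h3 := h1.comp_hasDerivWithinAt (s := univ) x h2.hasDerivWithinAt
    (fun y _ => ⟨ht, mem_univ _⟩)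
  exact h3.hasDerivAt Filter.univ_mem

lemma smooth_dx {w : ℝ → ℝ → ℝ}
    (hw : ContDiffOn ℝ (⊤ : ℕ∞) (Function.uncurry w) (Ici (0:ℝ) ×ˢ univ)) :
    ContDiffOn ℝ (⊤ : ℕ∞) (Function.uncurry fun t x => deriv (w t) x) (Ici (0:ℝ) ×ˢ univ) := by
  have h1 : ContDiffOn ℝ (⊤ : ℕ∞)
      (fun q => fderivWithin ℝ (Function.uncurry w) (Ici (0:ℝ) ×ˢ univ) q ((0:ℝ), (1:ℝ)))
      (Ici (0:ℝ) ×ˢ univ) :=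
    (hw.fderivWithin uniqueDiff_half (by simp)).clm_apply contDiffOn_const
  refine h1.congr ?_
  rintro ⟨t, x⟩ ⟨ht, _⟩
  exact (hasDerivAt_slice hw ht x).deriv

lemma hasDerivAt_dx {w : ℝ → ℝ → ℝ}
    (hw : ContDiffOn ℝ (⊤ : ℕ∞) (Function.uncurry w) (Ici (0:ℝ) ×ˢ univ)) {t : ℝ} (ht : 0 ≤ t)
    (x : ℝ) : HasDerivAt (w t) (deriv (w t) x) x :=
  (hasDerivAt_slice hw ht x).differentiableAt.hasDerivAt

lemma contDiffAt_int {w : ℝ → ℝ → ℝ}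
    (hw : ContDiffOn ℝ (⊤ : ℕ∞) (Function.uncurry w) (Ici (0:ℝ) ×ˢ univ)) {t : ℝ} (ht : 0 < t)
    (x : ℝ) : ContDiffAt ℝ (⊤ : ℕ∞) (Function.uncurry w) (t, x) :=
  hw.contDiffAt (prod_mem_nhds (Ici_mem_nhds ht) Filter.univ_mem)

lemma hasDerivAt_fst {F : ℝ × ℝ → ℝ} {t x : ℝ} (h : DifferentiableAt ℝ F (t, x)) :
    HasDerivAt (fun s => F (s, x)) (fderiv ℝ F (t, x) (1, 0)) t :=
  h.hasFDerivAt.comp_hasDerivAt t ((hasDerivAt_id t).prodMk (hasDerivAt_const t x))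

lemma hasDerivAt_snd {F : ℝ × ℝ → ℝ} {t x : ℝ} (h : DifferentiableAt ℝ F (t, x)) :
    HasDerivAt (fun y => F (t, y)) (fderiv ℝ F (t, x) (0, 1)) x :=
  h.hasFDerivAt.comp_hasDerivAt x ((hasDerivAt_const x t).prodMk (hasDerivAt_id x))

lemma hasDerivAt_dt {w : ℝ → ℝ → ℝ}
    (hw : ContDiffOn ℝ (⊤ : ℕ∞) (Function.uncurry w) (Ici (0:ℝ) ×ˢ univ)) {t : ℝ} (ht : 0 < t)
    (x : ℝ) : HasDerivAt (fun s => w s x) (deriv (fun s => w s x) t) t :=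
  (hasDerivAt_fst ((contDiffAt_int hw ht x).differentiableAt
    (by simp))).differentiableAt.hasDerivAt

/-- Mixed partial derivatives commute. -/
lemma mixed_partial {w : ℝ → ℝ → ℝ}
    (hw : ContDiffOn ℝ (⊤ : ℕ∞) (Function.uncurry w) (Ici (0:ℝ) ×ˢ univ)) {t : ℝ} (ht : 0 < t)
    (x d : ℝ) (hd : HasDerivAt (fun y => deriv (fun s => w s y) t) d x) :
    HasDerivAt (fun s => deriv (w s) x) d t := by
  set F := Function.uncurry w with hF
  have hc := contDiffAt_int hw ht x
  have hdiff : ∀ s, 0 < s → ∀ y, DifferentiableAt ℝ F (s, y) := fun s hs y =>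
    (contDiffAt_int hw hs y).differentiableAt (by simp)
  have hG : DifferentiableAt ℝ (fderiv ℝ F) (t, x) :=
    (hc.fderiv_right (m := 1) (by norm_cast)).differentiableAt (by simp)
  have hsym : IsSymmSndFDerivAt ℝ F (t, x) := hc.isSymmSndFDerivAt (by
    simp [minSmoothness_of_isRCLikeNormedField]; norm_cast)
  have h1 : HasDerivAt (fun s => fderiv ℝ F (s, x) (0, 1))
      (fderiv ℝ (fderiv ℝ F) (t, x) (1, 0) (0, 1)) t := by
    have := hG.hasFDerivAt.comp_hasDerivAt t ((hasDerivAt_id t).prodMk (hasDerivAt_const t x))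
    have h := this.clm_apply (hasDerivAt_const t ((0:ℝ), (1:ℝ)))
    simpa using h
  have h2 : HasDerivAt (fun y => fderiv ℝ F (t, y) (1, 0))
      (fderiv ℝ (fderiv ℝ F) (t, x) (0, 1) (1, 0)) x := by
    have := hG.hasFDerivAt.comp_hasDerivAt x ((hasDerivAt_const x t).prodMk (hasDerivAt_id x))
    have h := this.clm_apply (hasDerivAt_const x ((1:ℝ), (0:ℝ)))
    simpa using h
  have h3 : (fun y => deriv (fun s => w s y) t) = fun y => fderiv ℝ F (t, y) (1, 0) := by
    funext y
    exact (hasDerivAt_fst (hdiff t ht y)).deriv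
  rw [h3] at hd
  have h4 : d = fderiv ℝ (fderiv ℝ F) (t, x) (1, 0) (0, 1) := by
    rw [hd.unique h2]; exact hsym _ _
  rw [h4]
  refine h1.congr_of_eventuallyEq ?_
  filter_upwards [Ioi_mem_nhds ht] with s hs
  exact (hasDerivAt_snd (hdiff s hs x)).deriv

/-! ### Differentiation under the integral sign -/

lemma hasDerivAt_param {F F' : ℝ → ℝ → ℝ} {a b t : ℝ} (ht : 0 < t)
    (hF : ContinuousOn (Function.uncurry F) (Ioi 0 ×ˢ univ))
    (hF' : ContinuousOn (Function.uncurry F') (Ioi 0 ×ˢ univ))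
    (hd : ∀ s, 0 < s → ∀ x, HasDerivAt (fun s => F s x) (F' s x) s) :
    HasDerivAt (fun s => ∫ x in a..b, F s x) (∫ x in a..b, F' t x) t := by
  have hsl : ∀ {G : ℝ → ℝ → ℝ}, ContinuousOn (Function.uncurry G) (Ioi 0 ×ˢ univ) →
      ∀ s, 0 < s → Continuous (G s) := by
    intro G hG s hs
    rw [← continuousOn_univ]
    exact hG.comp (f := fun x : ℝ => (s, x)) (by fun_prop) (fun x _ => ⟨hs, mem_univ _⟩)
  have hK : IsCompact (Icc (t / 2) (2 * t) ×ˢ uIcc a b) := isCompact_Icc.prod isCompact_uIcc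
  obtain ⟨B, hB⟩ := hK.exists_bound_of_continuousOn (hF'.mono (by
    rintro ⟨s, x⟩ ⟨hs, _⟩
    exact ⟨lt_of_lt_of_le (by positivity) hs.1, mem_univ _⟩))
  refine (intervalIntegral.hasDerivAt_integral_of_dominated_loc_of_deriv_le
    (s := Icc (t / 2) (2 * t)) (bound := fun _ => B)
    (Icc_mem_nhds (by linarith) (by linarith)) ?_
    ((hsl hF t ht).intervalIntegrable _ _) (hsl hF' t ht).aestronglyMeasurable ?_ ?_ ?_).2
  · filter_upwards [Ioi_mem_nhds ht] with s hs
    exact (hsl hF s hs).aestronglyMeasurable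
  · refine Filter.Eventually.of_forall fun x hx s hs => ?_
    exact hB (s, x) ⟨hs, uIoc_subset_uIcc hx⟩
  · exact intervalIntegrable_const
  · refine Filter.Eventually.of_forall fun x hx s hs => ?_
    exact hd s (lt_of_lt_of_le (by positivity) hs.1) x

/-! ### The maximum principle -/

lemma max_principle {φ φt φx φxx : ℝ → ℝ → ℝ} {T : ℝ} (hT : 0 ≤ T)
    (hcont : ContinuousOn (Function.uncurry φ) (Ici 0 ×ˢ univ))
    (hper : ∀ t x, φ t (x + 1) = φ t x) (h0 : ∀ x, φ 0 x ≤ 0)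
    (ht : ∀ t, 0 < t → ∀ x, HasDerivAt (fun s => φ s x) (φt t x) t)
    (hx : ∀ t, 0 < t → ∀ x, HasDerivAt (φ t) (φx t x) x)
    (hxx : ∀ t, 0 < t → ∀ x, HasDerivAt (φx t) (φxx t x) x)
    (hneg : ∀ t, 0 < t → ∀ x, 0 < φ t x → φx t x = 0 → φxx t x ≤ 0 → φt t x < 0) :
    ∀ x, φ T x ≤ 0 := by
  have hK : IsCompact (Icc 0 T ×ˢ Icc (0:ℝ) 1) := isCompact_Icc.prod isCompact_Icc
  obtain ⟨⟨t0, x0⟩, ⟨ht0, hx0⟩, hmax⟩ := hK.exists_isMaxOn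
    ⟨(0, 0), ⟨⟨le_rfl, hT⟩, ⟨le_rfl, zero_le_one⟩⟩⟩
    (hcont.mono (by rintro ⟨s, x⟩ ⟨hs, _⟩; exact ⟨hs.1, mem_univ _⟩))
  have hall : ∀ t ∈ Icc 0 T, ∀ x, φ t x ≤ φ t0 x0 := by
    intro t htt x
    have hp : Function.Periodic (φ t) 1 := hper t
    obtain ⟨y, hy, hxy⟩ := hp.exists_mem_Ico₀ one_pos x
    rw [hxy]
    exact hmax (a := (t, y)) ⟨htt, ⟨hy.1, hy.2.le⟩⟩
  rcases le_or_gt (φ t0 x0) 0 with h | h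
  · intro x
    exact (hall T ⟨hT, le_rfl⟩ x).trans h
  exfalso
  have ht0p : 0 < t0 := by
    rcases ht0.1.eq_or_lt with h1 | h1
    · dsimp only at h1
      rw [← h1] at h
      exact absurd (h0 x0) (not_le.2 h)
    · exact h1
  have hxmax : IsLocalMax (φ t0) x0 := Filter.Eventually.of_forall fun x => hall t0 ht0 x
  have hd1 : φx t0 x0 = 0 := hxmax.hasDerivAt_eq_zero (hx t0 ht0p x0)
  have hdx : deriv (φ t0) = φx t0 := funext fun x => (hx t0 ht0p x).deriv
  have hd2 : φxx t0 x0 ≤ 0 := by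
    by_contra hcon
    push Not at hcon
    have hmin : IsLocalMin (φ t0) x0 := isLocalMin_of_deriv_deriv_pos
      (by rw [hdx, (hxx t0 ht0p x0).deriv]; exact hcon) (by rw [hdx]; exact hd1)
      (hx t0 ht0p x0).continuousAt
    have hev : φ t0 =ᶠ[nhds x0] fun _ => φ t0 x0 := by
      filter_upwards [hmin] with x hxm
      exact le_antisymm (hall t0 ht0 x) hxm
    have hev2 : φx t0 =ᶠ[nhds x0] fun _ => 0 := by
      have := hev.deriv
      rw [hdx] at this
      simpa using this
    have := (hxx t0 ht0p x0).unique ((hasDerivAt_const x0 (0:ℝ)).congr_of_eventuallyEq hev2)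
    linarith
  have hd3 := hneg t0 ht0p x0 h hd1 hd2
  have hder := ht t0 ht0p x0
  have h5 := (hasDerivAt_iff_tendsto_slope.1 hder).mono_left
    (nhdsWithin_mono t0 (s := Iio t0) (fun s (hs : s < t0) => ne_of_lt hs))
  have h6 : ∀ᶠ s in nhdsWithin t0 (Iio t0), 0 ≤ slope (fun s => φ s x0) t0 s := by
    filter_upwards [self_mem_nhdsWithin, mem_nhdsWithin_of_mem_nhds (Ioi_mem_nhds ht0p)] with s hs hs0
    rw [slope_def_field]
    have h7 := hall s ⟨le_of_lt hs0, (le_of_lt hs).trans ht0.2⟩ x0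
    have hs' : s - t0 < 0 := sub_neg.2 hs
    exact div_nonneg_of_nonpos (by linarith) hs'.le
  have h7 := ge_of_tendsto h5 h6
  linarith

/-! ### Derivatives of a Burgers solution -/

noncomputable def bx (u : ℝ → ℝ → ℝ) (t x : ℝ) : ℝ := deriv (u t) x
noncomputable def bxx (u : ℝ → ℝ → ℝ) (t x : ℝ) : ℝ := deriv (bx u t) x
noncomputable def bxxx (u : ℝ → ℝ → ℝ) (t x : ℝ) : ℝ := deriv (bxx u t) x
noncomputable def bt (f : ℝ → ℝ) (ν : ℝ) (u : ℝ → ℝ → ℝ) (t x : ℝ) : ℝ :=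
  ν * bxx u t x - deriv f (u t x) * bx u t x
noncomputable def btx (f : ℝ → ℝ) (ν : ℝ) (u : ℝ → ℝ → ℝ) (t x : ℝ) : ℝ :=
  ν * bxxx u t x - (deriv (deriv f) (u t x) * bx u t x * bx u t x + deriv f (u t x) * bxx u t x)
noncomputable def bg (f : ℝ → ℝ) (ν : ℝ) (u : ℝ → ℝ → ℝ) (t x : ℝ) : ℝ :=
  ν * bx u t x - f (u t x)

section burgers

variable {f : ℝ → ℝ} {σ ν : ℝ} {u : ℝ → ℝ → ℝ}

lemma f_deriv (hf : ContDiff ℝ (⊤ : ℕ∞) f) (y : ℝ) : HasDerivAt f (deriv f y) y :=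
  (hf.differentiable (by simp) y).hasDerivAt

lemma f_smooth1 (hf : ContDiff ℝ (⊤ : ℕ∞) f) : ContDiff ℝ (⊤ : ℕ∞) (deriv f) :=
  (contDiff_infty_iff_deriv.1 hf).2

lemma IsBurgersSolution.sx (h : IsBurgersSolution f σ ν u) :
    ContDiffOn ℝ (⊤ : ℕ∞) (Function.uncurry (bx u)) (Ici (0:ℝ) ×ˢ univ) := smooth_dx h.hu

lemma IsBurgersSolution.sxx (h : IsBurgersSolution f σ ν u) :
    ContDiffOn ℝ (⊤ : ℕ∞) (Function.uncurry (bxx u)) (Ici (0:ℝ) ×ˢ univ) := smooth_dx h.sx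

lemma IsBurgersSolution.u_x (h : IsBurgersSolution f σ ν u) {t : ℝ} (ht : 0 ≤ t) (x : ℝ) :
    HasDerivAt (u t) (bx u t x) x := hasDerivAt_dx h.hu ht x

lemma IsBurgersSolution.bx_x (h : IsBurgersSolution f σ ν u) {t : ℝ} (ht : 0 ≤ t) (x : ℝ) :
    HasDerivAt (bx u t) (bxx u t x) x := hasDerivAt_dx h.sx ht x

lemma IsBurgersSolution.bxx_x (h : IsBurgersSolution f σ ν u) {t : ℝ} (ht : 0 ≤ t) (x : ℝ) :
    HasDerivAt (bxx u t) (bxxx u t x) x := hasDerivAt_dx h.sxx ht x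

lemma IsBurgersSolution.bt_x (h : IsBurgersSolution f σ ν u) {t : ℝ} (ht : 0 ≤ t) (x : ℝ) :
    HasDerivAt (bt f ν u t) (btx f ν u t x) x := by
  have h1 := (h.bxx_x ht x).const_mul ν
  have h2 := (f_deriv (f_smooth1 h.hf) (u t x)).comp x (h.u_x ht x)
  exact h1.sub (h2.mul (h.bx_x ht x))

lemma IsBurgersSolution.deriv_t (h : IsBurgersSolution f σ ν u) {t : ℝ} (ht : 0 < t) (x : ℝ) :
    deriv (fun s => u s x) t = bt f ν u t x := by
  have h1 := h.hpde t ht x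
  have h2 : deriv (deriv (u t)) x = bxx u t x := rfl
  have h3 : deriv (u t) x = bx u t x := rfl
  rw [h2, h3] at h1
  unfold bt
  linarith

lemma IsBurgersSolution.u_t (h : IsBurgersSolution f σ ν u) {t : ℝ} (ht : 0 < t) (x : ℝ) :
    HasDerivAt (fun s => u s x) (bt f ν u t x) t := by
  rw [← h.deriv_t ht x]
  exact hasDerivAt_dt h.hu ht x

lemma IsBurgersSolution.bx_t (h : IsBurgersSolution f σ ν u) {t : ℝ} (ht : 0 < t) (x : ℝ) :
    HasDerivAt (fun s => bx u s x) (btx f ν u t x) t := by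
  refine mixed_partial h.hu ht x _ ?_
  have : (fun y => deriv (fun s => u s y) t) = bt f ν u t := funext fun y => h.deriv_t ht y
  rw [this]
  exact h.bt_x ht.le x

lemma IsBurgersSolution.bg_x (h : IsBurgersSolution f σ ν u) {t : ℝ} (ht : 0 ≤ t) (x : ℝ) :
    HasDerivAt (bg f ν u t) (bt f ν u t x) x :=
  ((h.bx_x ht x).const_mul ν).sub ((f_deriv h.hf (u t x)).comp x (h.u_x ht x))

lemma IsBurgersSolution.bg_t (h : IsBurgersSolution f σ ν u) {t : ℝ} (ht : 0 < t) (x : ℝ) :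
    HasDerivAt (fun s => bg f ν u s x)
      (ν * btx f ν u t x - deriv f (u t x) * bt f ν u t x) t :=
  ((h.bx_t ht x).const_mul ν).sub ((f_deriv h.hf (u t x)).comp t (h.u_t ht x))

lemma bx_per (hper : ∀ t x, u t (x + 1) = u t x) (t x : ℝ) : bx u t (x + 1) = bx u t x := by
  unfold bx
  rw [← deriv_comp_add_const]
  simp_rw [hper]

lemma bg_per (hper : ∀ t x, u t (x + 1) = u t x) (t x : ℝ) :
    bg f ν u t (x + 1) = bg f ν u t x := by
  unfold bg
  rw [bx_per hper, hper]

lemma IsBurgersSolution.cu (h : IsBurgersSolution f σ ν u) :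
    ContinuousOn (Function.uncurry u) (Ici 0 ×ˢ univ) := h.hu.continuousOn

lemma IsBurgersSolution.cx (h : IsBurgersSolution f σ ν u) :
    ContinuousOn (Function.uncurry (bx u)) (Ici 0 ×ˢ univ) := h.sx.continuousOn

lemma IsBurgersSolution.ct (h : IsBurgersSolution f σ ν u) :
    ContinuousOn (Function.uncurry (bt f ν u)) (Ici 0 ×ˢ univ) := by
  have h1 : ContinuousOn (fun q => deriv f (Function.uncurry u q)) (Ici (0:ℝ) ×ˢ univ) :=
    (f_smooth1 h.hf).continuous.comp_continuousOn h.cu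
  exact (continuousOn_const.mul h.sxx.continuousOn).sub (h1.mul h.cx)

lemma IsBurgersSolution.cg (h : IsBurgersSolution f σ ν u) :
    ContinuousOn (Function.uncurry (bg f ν u)) (Ici 0 ×ˢ univ) := by
  have h1 : ContinuousOn (fun q => f (Function.uncurry u q)) (Ici (0:ℝ) ×ˢ univ) :=
    h.hf.continuous.comp_continuousOn h.cu
  exact (continuousOn_const.mul h.cx).sub h1

lemma cslice {G : ℝ → ℝ → ℝ} (hG : ContinuousOn (Function.uncurry G) (Ici 0 ×ˢ univ)) {t : ℝ}
    (ht : 0 ≤ t) : Continuous (G t) := by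
  rw [← continuousOn_univ]
  exact hG.comp (f := fun x : ℝ => (t, x)) (by fun_prop) (fun x _ => ⟨ht, mem_univ _⟩)

lemma IsBurgersSolution.hconv' (h : IsBurgersSolution f σ ν u) (y : ℝ) :
    σ ≤ deriv (deriv f) y := by
  have := h.hconv y
  rwa [iteratedDeriv_succ, iteratedDeriv_one] at this

/-! ### Initial data -/

lemma IsBurgersSolution.sup_init (h : IsBurgersSolution f σ ν u) (x : ℝ) :
    |bx u 0 x| ≤ burgersD u := by
  have hc : Continuous (bx u 0) := cslice h.cx le_rfl
  have hp : Function.Periodic (bx u 0) 1 := bx_per h.hper 0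
  have hfin : eLpNorm (bx u 0) ⊤ (volume.restrict (Ioc (0:ℝ) 1)) ≠ ⊤ := by
    obtain ⟨B, hB⟩ := (isCompact_Icc (a := (0:ℝ)) (b := 1)).exists_bound_of_continuousOn
      hc.continuousOn
    have := eLpNorm_le_of_ae_bound (p := ⊤) (μ := volume.restrict (Ioc (0:ℝ) 1))
      (f := bx u 0) (C := B) ((ae_restrict_iff' measurableSet_Ioc).2
        (Filter.Eventually.of_forall fun y hy => hB y ⟨hy.1.le, hy.2⟩))
    refine ne_top_of_le_ne_top ?_ this
    simp
  have hae : ∀ᵐ y ∂(volume.restrict (Ioc (0:ℝ) 1)), |bx u 0 y| ≤ sobLp 1 ⊤ (u 0) := by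
    have h1 := enorm_ae_le_eLpNormEssSup (bx u 0) (volume.restrict (Ioc (0:ℝ) 1))
    rw [← eLpNorm_exponent_top] at h1
    filter_upwards [h1] with y hy
    unfold sobLp
    rw [iteratedDeriv_one]
    have h2 := ENNReal.toReal_mono hfin hy
    have h3 : deriv (u 0) = bx u 0 := rfl
    rw [h3]
    simpa using h2
  have hall : ∀ y ∈ Icc (0:ℝ) 1, |bx u 0 y| ≤ sobLp 1 ⊤ (u 0) := by
    have h1 : ∀ᵐ y ∂(volume.restrict (Ioo (0:ℝ) 1)), |bx u 0 y| ≤ sobLp 1 ⊤ (u 0) :=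
      ae_restrict_of_ae_restrict_of_subset Ioo_subset_Ioc_self hae
    have hd : Dense {y | y ∈ Ioo (0:ℝ) 1 → |bx u 0 y| ≤ sobLp 1 ⊤ (u 0)} :=
      Measure.dense_of_ae ((ae_restrict_iff' measurableSet_Ioo).1 h1)
    have hoo : ∀ y ∈ Ioo (0:ℝ) 1, |bx u 0 y| ≤ sobLp 1 ⊤ (u 0) := by
      intro y hy
      by_contra hcon
      push Not at hcon
      have hopen : IsOpen (Ioo (0:ℝ) 1 ∩ {y | sobLp 1 ⊤ (u 0) < |bx u 0 y|}) :=
        isOpen_Ioo.inter (isOpen_lt continuous_const hc.abs)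
      obtain ⟨z, hz1, hz2⟩ := hd.inter_open_nonempty _ hopen ⟨y, hy, hcon⟩
      exact absurd (hz2 hz1.1) (not_le.2 hz1.2)
    have hcl : IsClosed {y | |bx u 0 y| ≤ sobLp 1 ⊤ (u 0)} :=
      isClosed_le hc.abs continuous_const
    have h3 : closure (Ioo (0:ℝ) 1) ⊆ {y | |bx u 0 y| ≤ sobLp 1 ⊤ (u 0)} :=
      closure_minimal hoo hcl
    rwa [closure_Ioo (by norm_num)] at h3
  obtain ⟨y, hy, hxy⟩ := hp.exists_mem_Ico₀ one_pos x
  rw [hxy]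
  exact (hall y ⟨hy.1, hy.2.le⟩).trans (le_max_right _ _)

lemma sob_one_eq (hc : Continuous (u 0)) : sobLp 0 1 (u 0) = ∫ x in (0:ℝ)..1, |u 0 x| := by
  unfold sobLp
  rw [iteratedDeriv_zero, toReal_eLpNorm hc.aestronglyMeasurable,
    lpNorm_one_eq_integral_norm hc.aestronglyMeasurable,
    intervalIntegral.integral_of_le zero_le_one]
  simp

lemma IsBurgersSolution.int_abs_pos (h : IsBurgersSolution f σ ν u) :
    0 < ∫ x in (0:ℝ)..1, |u 0 x| := by
  have hc : Continuous (u 0) := cslice h.cu le_rfl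
  have hp : Function.Periodic (u 0) 1 := h.hper 0
  obtain ⟨x, hx⟩ := h.hinit
  obtain ⟨y, hy, hxy⟩ := hp.exists_mem_Ico₀ one_pos x
  rw [hxy] at hx
  exact intervalIntegral.integral_pos zero_lt_one hc.abs.continuousOn (fun _ _ => abs_nonneg _)
    ⟨y, ⟨hy.1, hy.2.le⟩, abs_pos.2 hx⟩

lemma IsBurgersSolution.D_pos (h : IsBurgersSolution f σ ν u) : 0 < burgersD u := by
  refine lt_of_lt_of_le ?_ (le_max_left _ _)
  rw [sob_one_eq (cslice h.cu le_rfl)]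
  exact inv_pos.2 h.int_abs_pos

lemma IsBurgersSolution.energy_init (h : IsBurgersSolution f σ ν u) :
    ((burgersD u) ^ 2)⁻¹ ≤ ∫ x in (0:ℝ)..1, u 0 x ^ 2 := by
  have hc : Continuous (u 0) := cslice h.cu le_rfl
  set m := ∫ x in (0:ℝ)..1, |u 0 x| with hm
  have hmp : 0 < m := h.int_abs_pos
  have hDm : m⁻¹ ≤ burgersD u := by
    rw [hm, ← sob_one_eq hc]; exact le_max_left _ _
  have h1 : (burgersD u)⁻¹ ≤ m := by
    rw [inv_le_comm₀ h.D_pos hmp]; exact hDm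
  have h2 : m ^ 2 ≤ ∫ x in (0:ℝ)..1, u 0 x ^ 2 := by
    have h3 : ∫ x in (0:ℝ)..1, (2 * m * |u 0 x| - m ^ 2) ≤ ∫ x in (0:ℝ)..1, u 0 x ^ 2 := by
      refine intervalIntegral.integral_mono_on zero_le_one
        (Continuous.intervalIntegrable (by fun_prop) _ _)
        (Continuous.intervalIntegrable (by fun_prop) _ _) ?_
      intro x _
      rw [← sq_abs (u 0 x)]
      nlinarith [sq_nonneg (|u 0 x| - m)]
    rw [intervalIntegral.integral_sub (Continuous.intervalIntegrable (by fun_prop) _ _)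
      (Continuous.intervalIntegrable (by fun_prop) _ _),
      intervalIntegral.integral_const_mul, ← hm] at h3
    simp at h3
    nlinarith
  rw [← inv_pow]
  have h4 : 0 < (burgersD u)⁻¹ := inv_pos.2 h.D_pos
  exact (pow_le_pow_left₀ h4.le h1 2).trans h2

lemma IsBurgersSolution.sob_two_eq (h : IsBurgersSolution f σ ν u) {t : ℝ} (ht : 0 ≤ t) :
    sobLp 1 2 (u t) ^ 2 = ∫ x in (0:ℝ)..1, bx u t x ^ 2 := by
  have hc : Continuous (bx u t) := cslice h.cx ht
  unfold sobLp
  have h1 : iteratedDeriv 1 (u t) = bx u t := by rw [iteratedDeriv_one]; rfl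
  rw [h1, toReal_eLpNorm hc.aestronglyMeasurable,
    lpNorm_eq_integral_norm_rpow_toReal (by simp) (by simp) hc.aestronglyMeasurable,
    intervalIntegral.integral_of_le zero_le_one]
  rw [← Real.rpow_natCast, ← Real.rpow_mul (by positivity)]
  simp

/-! ### One-sided and flux bounds -/

lemma IsBurgersSolution.bx_le_D (h : IsBurgersSolution f σ ν u) {t : ℝ} (ht : 0 ≤ t) (x : ℝ) :
    bx u t x ≤ burgersD u := by
  have key : ∀ ε > 0, bx u t x - (burgersD u + ε * t) ≤ 0 := by
    intro ε hε
    refine max_principle (φ := fun t x => bx u t x - (burgersD u + ε * t))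
      (φt := fun t x => btx f ν u t x - ε * 1) (φx := fun t x => bxx u t x)
      (φxx := fun t x => bxxx u t x) ht ?_ ?_ ?_ ?_ ?_ ?_ ?_ x
    · have : ContinuousOn (fun q : ℝ × ℝ => burgersD u + ε * q.1) (Ici (0:ℝ) ×ˢ univ) := by
        fun_prop
      exact h.cx.sub this
    · intro t x; simp only [bx_per h.hper]
    · intro x
      have := (le_abs_self _).trans (h.sup_init x)
      simp; exact this
    · intro t ht x
      exact (h.bx_t ht x).sub (((hasDerivAt_id t).const_mul ε).const_add _)
    · intro t ht x; exact (h.bx_x ht.le x).sub_const _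
    · intro t ht x; exact h.bxx_x ht.le x
    · intro t ht x hpos hx hxx
      have h1 := h.hconv' (u t x)
      have h2 := h.hσ
      have h3 : ν * bxxx u t x ≤ 0 := mul_nonpos_of_nonneg_of_nonpos h.hν.le hxx
      have h4 : 0 ≤ deriv (deriv f) (u t x) * (bx u t x * bx u t x) :=
        mul_nonneg (by linarith) (mul_self_nonneg _)
      simp only [btx]
      rw [hx]
      nlinarith
  by_contra hcon
  push Not at hcon
  have h1 := key ((bx u t x - burgersD u) / (2 * (t + 1))) (by
    apply div_pos <;> linarith)
  have h2 : (bx u t x - burgersD u) / (2 * (t + 1)) * t ≤ (bx u t x - burgersD u) / 2 := by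
    rw [div_mul_eq_mul_div, div_le_div_iff₀ (by linarith) (by norm_num)]
    nlinarith
  linarith

lemma IsBurgersSolution.bx_le_inv (h : IsBurgersSolution f σ ν u) {t : ℝ} (ht : 0 ≤ t) (x : ℝ) :
    σ * t * bx u t x ≤ 1 := by
  have key : σ * t * bx u t x - 1 ≤ 0 := by
    refine max_principle (φ := fun t x => σ * t * bx u t x - 1)
      (φt := fun t x => σ * 1 * bx u t x + σ * t * btx f ν u t x)
      (φx := fun t x => σ * t * bxx u t x)
      (φxx := fun t x => σ * t * bxxx u t x) ht ?_ ?_ ?_ ?_ ?_ ?_ ?_ x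
    · have : ContinuousOn (fun q : ℝ × ℝ => σ * q.1) (Ici (0:ℝ) ×ˢ univ) := by
        fun_prop
      exact (this.mul h.cx).sub continuousOn_const
    · intro t x; simp only [bx_per h.hper]
    · intro x; simp
    · intro t ht x
      exact (((hasDerivAt_id t).const_mul σ).mul (h.bx_t ht x)).sub_const _
    · intro t ht x; exact ((h.bx_x ht.le x).const_mul _).sub_const _
    · intro t ht x; exact (h.bxx_x ht.le x).const_mul _
    · intro t ht x hpos hx hxx
      have h1 := h.hconv' (u t x)
      have h2 := h.hσ
      have hst : 0 < σ * t := mul_pos h2 ht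
      have h5 : bxx u t x = 0 := by
        rcases mul_eq_zero.1 hx with h6 | h6
        · linarith
        · exact h6
      have h6 : bxxx u t x ≤ 0 := by
        by_contra hc
        push Not at hc
        have := mul_pos hst hc
        linarith
      have h3 : ν * bxxx u t x ≤ 0 := mul_nonpos_of_nonneg_of_nonpos h.hν.le h6
      have hv : 0 < bx u t x := by
        by_contra hc
        push Not at hc
        nlinarith
      simp only [btx]
      rw [h5]
      have h4 : σ * (bx u t x * bx u t x) ≤ deriv (deriv f) (u t x) * (bx u t x * bx u t x) :=
        mul_le_mul_of_nonneg_right h1 (mul_self_nonneg _)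
      have h7 : σ * t * (ν * bxxx u t x -
          (deriv (deriv f) (u t x) * bx u t x * bx u t x + deriv f (u t x) * 0)) ≤
          σ * t * (-(σ * (bx u t x * bx u t x))) :=
        mul_le_mul_of_nonneg_left (by linarith) hst.le
      have h8 : 0 < σ * bx u t x * (σ * t * bx u t x - 1) :=
        mul_pos (mul_pos h2 hv) hpos
      nlinarith
  linarith

lemma IsBurgersSolution.mean' (h : IsBurgersSolution f σ ν u) {t : ℝ} (ht : 0 ≤ t) :
    ∫ x in (0:ℝ)..1, u t x = 0 := by
  rw [intervalIntegral.integral_of_le zero_le_one]; exact h.hmean t ht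

lemma IsBurgersSolution.incr_le (h : IsBurgersSolution f σ ν u) {t B : ℝ} (ht : 0 ≤ t)
    (hB : ∀ x, bx u t x ≤ B) {x y : ℝ} (hxy : x ≤ y) : u t y - u t x ≤ B * (y - x) := by
  refine image_sub_le_mul_sub_of_deriv_le (f := u t)
    (fun x => (h.u_x ht x).differentiableAt) (fun x => ?_) hxy
  exact hB x

lemma IsBurgersSolution.abs_le_of (h : IsBurgersSolution f σ ν u) {t B : ℝ} (ht : 0 ≤ t)
    (hB : ∀ x, bx u t x ≤ B) (x : ℝ) : |u t x| ≤ B := by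
  have hc : Continuous (u t) := cslice h.cu ht
  have hp : Function.Periodic (u t) 1 := h.hper t
  -- a zero
  have hz : ∃ z, u t z = 0 := by
    by_contra hcon
    push Not at hcon
    have hpc : IsPreconnected (univ : Set ℝ) := isPreconnected_univ
    have hsign : (∀ z, 0 < u t z) ∨ (∀ z, u t z < 0) := by
      by_contra hc2
      push Not at hc2
      obtain ⟨⟨a, ha⟩, ⟨b, hb⟩⟩ := hc2
      obtain ⟨z, _, hz⟩ := hpc.intermediate_value (mem_univ a) (mem_univ b) hc.continuousOn
        ⟨ha, hb⟩
      exact hcon z hz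
    have hm := h.mean' ht
    rcases hsign with hs | hs
    · have := intervalIntegral.intervalIntegral_pos_of_pos (hc.intervalIntegrable 0 1) hs
        zero_lt_one
      linarith
    · have := intervalIntegral.intervalIntegral_pos_of_pos (hc.neg.intervalIntegrable 0 1)
        (fun z => neg_pos.2 (hs z)) zero_lt_one
      simp only [Pi.neg_apply, intervalIntegral.integral_neg] at this
      linarith
  obtain ⟨z, hz⟩ := hz
  have hB0 : 0 ≤ B := by
    have := h.incr_le ht hB (x := z) (y := z + 1) (by linarith)
    rw [h.hper] at this
    linarith
  rw [abs_le]
  constructor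
  · obtain ⟨z', hz', hzz⟩ := hp.exists_mem_Ico one_pos z x
    have := h.incr_le ht hB (x := x) (y := z') hz'.1
    have h2 := hz'.2
    rw [← hzz, hz] at this
    nlinarith
  · obtain ⟨z', hz', hzz⟩ := hp.exists_mem_Ico one_pos z (x - 1)
    have h2 := hz'.2
    have h3 := hz'.1
    have := h.incr_le ht hB (x := z') (y := x) (by linarith)
    rw [← hzz, hz] at this
    nlinarith

lemma IsBurgersSolution.abs_le_D (h : IsBurgersSolution f σ ν u) {t : ℝ} (ht : 0 ≤ t) (x : ℝ) :
    |u t x| ≤ burgersD u := h.abs_le_of ht (fun x => h.bx_le_D ht x) x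

lemma IsBurgersSolution.bg_le (h : IsBurgersSolution f σ ν u) {M s : ℝ}
    (hM : ∀ x, s * bg f ν u 0 x ≤ M) {t : ℝ} (ht : 0 ≤ t) (x : ℝ) : s * bg f ν u t x ≤ M := by
  have key : ∀ ε > 0, s * bg f ν u t x - (M + ε * t) ≤ 0 := by
    intro ε hε
    refine max_principle (φ := fun t x => s * bg f ν u t x - (M + ε * t))
      (φt := fun t x => s * (ν * btx f ν u t x - deriv f (u t x) * bt f ν u t x) - ε * 1)
      (φx := fun t x => s * bt f ν u t x)
      (φxx := fun t x => s * btx f ν u t x) ht ?_ ?_ ?_ ?_ ?_ ?_ ?_ x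
    · have : ContinuousOn (fun q : ℝ × ℝ => M + ε * q.1) (Ici (0:ℝ) ×ˢ univ) := by
        fun_prop
      exact (continuousOn_const.mul h.cg).sub this
    · intro t x; simp only [bg_per h.hper]
    · intro x
      have := hM x
      simp; exact this
    · intro t ht x
      exact ((h.bg_t ht x).const_mul s).sub (((hasDerivAt_id t).const_mul ε).const_add _)
    · intro t ht x; exact ((h.bg_x ht.le x).const_mul s).sub_const _
    · intro t ht x; exact (h.bt_x ht.le x).const_mul s
    · intro t ht x hpos hx hxx
      have h3 : ν * (s * btx f ν u t x) ≤ 0 := mul_nonpos_of_nonneg_of_nonpos h.hν.le hxx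
      have h4 : deriv f (u t x) * (s * bt f ν u t x) = 0 := by rw [hx, mul_zero]
      nlinarith
  by_contra hcon
  push Not at hcon
  set w := s * bg f ν u t x
  have h1 := key ((w - M) / (2 * (t + 1))) (by
    apply div_pos <;> linarith)
  have h2 : (w - M) / (2 * (t + 1)) * t ≤ (w - M) / 2 := by
    rw [div_mul_eq_mul_div, div_le_div_iff₀ (by linarith) (by norm_num)]
    nlinarith
  linarith

lemma IsBurgersSolution.bx_abs_le (h : IsBurgersSolution f σ ν u) (hν1 : ν ≤ 1) {F : ℝ}
    (hF : ∀ y, |y| ≤ burgersD u → |f y| ≤ F) {t : ℝ} (ht : 0 ≤ t) (x : ℝ) :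
    ν * |bx u t x| ≤ burgersD u + 2 * F := by
  have hD := h.D_pos
  have hν := h.hν
  have h0 : ∀ x, |bg f ν u 0 x| ≤ burgersD u + F := by
    intro x
    unfold bg
    have h1 := h.sup_init x
    have h2 := hF _ (h.abs_le_D le_rfl x)
    calc |ν * bx u 0 x - f (u 0 x)| ≤ |ν * bx u 0 x| + |f (u 0 x)| := abs_sub _ _
      _ ≤ _ := by
        rw [abs_mul, abs_of_pos hν]
        nlinarith [abs_nonneg (bx u 0 x)]
  have h1 := h.bg_le (s := 1) (M := burgersD u + F)
    (fun x => by rw [one_mul]; exact (le_abs_self _).trans (h0 x)) ht x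
  have h2 := h.bg_le (s := -1) (M := burgersD u + F)
    (fun x => by rw [neg_one_mul]; exact (neg_le_abs _).trans (h0 x)) ht x
  have h3 := abs_le.1 (hF _ (h.abs_le_D ht x))
  have h4 : ν * |bx u t x| = |ν * bx u t x| := by rw [abs_mul, abs_of_pos hν]
  rw [h4, abs_le]
  unfold bg at h1 h2
  constructor <;> linarith [h3.1, h3.2]

end burgers

/-! ### Energy identities -/

section energy

variable {f : ℝ → ℝ} {σ ν : ℝ} {u : ℝ → ℝ → ℝ}

lemma cont_ext {G : ℝ → ℝ → ℝ} (hG : ContinuousOn (Function.uncurry G) (Ici 0 ×ˢ univ)) :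
    Continuous (Function.uncurry fun t x => G (max t 0) x) :=
  hG.comp_continuous (f := fun q : ℝ × ℝ => (max q.1 0, q.2)) (by fun_prop)
    (fun q => ⟨mem_Ici.2 (le_max_right _ _), mem_univ _⟩)

lemma cont_int {G : ℝ → ℝ → ℝ} (hG : ContinuousOn (Function.uncurry G) (Ici 0 ×ˢ univ)) (a b : ℝ) :
    ContinuousOn (fun t => ∫ x in a..b, G t x) (Ici 0) := by
  have h1 : Continuous (fun t => ∫ x in a..b, G (max t 0) x) :=
    intervalIntegral.continuous_parametric_intervalIntegral_of_continuous' (cont_ext hG) a b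
  refine h1.continuousOn.congr ?_
  intro t ht
  simp only [max_eq_left (mem_Ici.1 ht)]

lemma int_deriv_zero {H H' : ℝ → ℝ} (hd : ∀ x, HasDerivAt H (H' x) x) (hc : Continuous H')
    (hp : H 1 = H 0) : ∫ x in (0:ℝ)..1, H' x = 0 := by
  rw [intervalIntegral.integral_eq_sub_of_hasDerivAt (fun x _ => hd x)
    (hc.intervalIntegrable _ _), hp, sub_self]

lemma shift_int {H : ℝ → ℝ} (hp : Function.Periodic H 1) (ℓ : ℝ) :
    ∫ x in (0:ℝ)..1, H (x + ℓ) = ∫ x in (0:ℝ)..1, H x := by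
  rw [intervalIntegral.integral_comp_add_right]
  have := hp.intervalIntegral_add_eq ℓ 0
  rw [zero_add] at this
  rw [zero_add, add_comm 1 ℓ, this]

noncomputable def prim (f : ℝ → ℝ) (y : ℝ) : ℝ := ∫ s in (0:ℝ)..y, f s

lemma prim_deriv (hf : Continuous f) (y : ℝ) : HasDerivAt (prim f) (f y) y :=
  intervalIntegral.integral_hasDerivAt_right (hf.intervalIntegrable _ _)
    (hf.stronglyMeasurableAtFilter _ _) hf.continuousAt

lemma mono_half {G : ℝ → ℝ → ℝ} (hG : ContinuousOn (Function.uncurry G) (Ici 0 ×ˢ univ)) :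
    ContinuousOn (Function.uncurry G) (Ioi 0 ×ˢ univ) :=
  hG.mono (prod_mono Ioi_subset_Ici_self le_rfl)

lemma IsBurgersSolution.energy_deriv (h : IsBurgersSolution f σ ν u) {t : ℝ} (ht : 0 < t) :
    HasDerivAt (fun s => ∫ x in (0:ℝ)..1, u s x ^ 2)
      (-2 * (ν * ∫ x in (0:ℝ)..1, bx u t x ^ 2)) t := by
  have c2 : ContinuousOn (Function.uncurry fun s x => u s x ^ 2) (Ici 0 ×ˢ univ) := h.cu.pow 2
  have c3 : ContinuousOn (Function.uncurry fun s x =>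
      (2 : ℕ) * u s x ^ (2 - 1) * bt f ν u s x) (Ici 0 ×ˢ univ) :=
    (continuousOn_const.mul (h.cu.pow 1)).mul h.ct
  have h1 := hasDerivAt_param (F := fun s x => u s x ^ 2)
    (F' := fun s x => (2 : ℕ) * u s x ^ (2 - 1) * bt f ν u s x) (a := 0) (b := 1) ht
    (mono_half c2) (mono_half c3)
    (fun s hs x => (h.u_t hs x).pow 2)
  convert h1 using 1
  have cu := cslice h.cu ht.le
  have cx := cslice h.cx ht.le
  have ct := cslice h.ct ht.le
  have h2 : ∫ x in (0:ℝ)..1, (ν * bx u t x ^ 2 + u t x * bt f ν u t x) = 0 := by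
    refine int_deriv_zero (H := fun x => u t x * bg f ν u t x + prim f (u t x)) ?_
      (by fun_prop) ?_
    · intro x
      have := ((h.u_x ht.le x).mul (h.bg_x ht.le x)).add
        ((prim_deriv h.hf.continuous (u t x)).comp x (h.u_x ht.le x))
      refine this.congr_deriv ?_
      unfold bg
      ring
    · have e1 := h.hper t 0
      have e2 := bg_per (f := f) (ν := ν) h.hper t 0
      rw [zero_add] at e1 e2
      simp only [e1, e2]
  rw [intervalIntegral.integral_add (Continuous.intervalIntegrable (by fun_prop) _ _)
    (Continuous.intervalIntegrable (by fun_prop) _ _),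
    intervalIntegral.integral_const_mul] at h2
  have h3 : ∫ x in (0:ℝ)..1, ((2 : ℕ) * u t x ^ (2 - 1) * bt f ν u t x) =
      2 * ∫ x in (0:ℝ)..1, u t x * bt f ν u t x := by
    rw [← intervalIntegral.integral_const_mul]
    congr 1
    funext x
    push_cast
    ring
  rw [h3]
  linarith

lemma IsBurgersSolution.energy_lower (h : IsBurgersSolution f σ ν u) {Ct : ℝ}
    (hCt : ∀ t, 0 ≤ t → ν * ∫ x in (0:ℝ)..1, bx u t x ^ 2 ≤ Ct) {T : ℝ} (hT : 0 ≤ T) :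
    (∫ x in (0:ℝ)..1, u 0 x ^ 2) - 2 * Ct * T ≤ ∫ x in (0:ℝ)..1, u T x ^ 2 := by
  have hmono : MonotoneOn (fun s => (∫ x in (0:ℝ)..1, u s x ^ 2) + 2 * Ct * s) (Ici 0) := by
    refine monotoneOn_of_deriv_nonneg (convex_Ici 0) ?_ ?_ ?_
    · have c2 : ContinuousOn (Function.uncurry fun s x => u s x ^ 2) (Ici 0 ×ˢ univ) := h.cu.pow 2
      have h1 : ContinuousOn (fun s => ∫ x in (0:ℝ)..1, u s x ^ 2) (Ici 0) :=
        cont_int (G := fun s x => u s x ^ 2) c2 0 1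
      exact h1.add (by fun_prop)
    · intro t ht
      rw [interior_Ici] at ht
      exact ((h.energy_deriv ht).add
        ((hasDerivAt_id t).const_mul (2 * Ct))).differentiableAt.differentiableWithinAt
    · intro t ht
      rw [interior_Ici] at ht
      have h1 := ((h.energy_deriv ht).add ((hasDerivAt_id t).const_mul (2 * Ct))).deriv
      have h2 := hCt t (le_of_lt ht)
      have h3 : deriv (fun s => (∫ x in (0:ℝ)..1, u s x ^ 2) + 2 * Ct * s) t =
        -2 * (ν * ∫ x in (0:ℝ)..1, bx u t x ^ 2) + 2 * Ct * 1 := h1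
      rw [h3]
      linarith
  have := hmono (mem_Ici.2 le_rfl) (mem_Ici.2 hT) hT
  simp only [mul_zero, add_zero] at this
  linarith

/-! ### The flux identity at scale `ℓ` -/

noncomputable def bU (u : ℝ → ℝ → ℝ) (ℓ t x : ℝ) : ℝ := ∫ r in (0:ℝ)..ℓ, u t (x + r)

lemma IsBurgersSolution.cU (h : IsBurgersSolution f σ ν u) (ℓ : ℝ) :
    ContinuousOn (Function.uncurry (bU u ℓ)) (Ici 0 ×ˢ univ) := by
  have h0 := cont_ext h.cu
  have h1 : Continuous (fun q : ℝ × ℝ => ∫ r in (0:ℝ)..ℓ, u (max q.1 0) (q.2 + r)) :=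
    intervalIntegral.continuous_parametric_intervalIntegral_of_continuous'
      (f := fun (q : ℝ × ℝ) r => u (max q.1 0) (q.2 + r))
      (h0.comp (by fun_prop : Continuous fun z : (ℝ × ℝ) × ℝ => (z.1.1, z.1.2 + z.2))) 0 ℓ
  refine h1.continuousOn.congr ?_
  rintro ⟨t, x⟩ ⟨ht, _⟩
  simp only [Function.uncurry, bU, max_eq_left (mem_Ici.1 ht)]

lemma IsBurgersSolution.U_x (h : IsBurgersSolution f σ ν u) (ℓ : ℝ) {t : ℝ} (ht : 0 ≤ t) (x : ℝ) :
    HasDerivAt (bU u ℓ t) (u t (x + ℓ) - u t x) x := by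
  have hc := cslice h.cu ht
  have h1 : bU u ℓ t = fun x => prim (u t) (x + ℓ) - prim (u t) x := by
    funext x
    unfold bU prim
    rw [intervalIntegral.integral_comp_add_left, add_zero,
      intervalIntegral.integral_interval_sub_left (hc.intervalIntegrable _ _)
      (hc.intervalIntegrable _ _)]
  rw [h1]
  exact ((prim_deriv hc (x + ℓ)).comp_add_const x ℓ).sub (prim_deriv hc x)

lemma IsBurgersSolution.U_t (h : IsBurgersSolution f σ ν u) (ℓ : ℝ) {t : ℝ} (ht : 0 < t) (x : ℝ) :
    HasDerivAt (fun s => bU u ℓ s x) (bg f ν u t (x + ℓ) - bg f ν u t x) t := by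
  have sh : ∀ {G : ℝ → ℝ → ℝ}, ContinuousOn (Function.uncurry G) (Ici 0 ×ˢ univ) →
      ContinuousOn (Function.uncurry fun s r => G s (x + r)) (Ioi 0 ×ˢ univ) := by
    intro G hG
    exact hG.comp (f := fun q : ℝ × ℝ => (q.1, x + q.2)) (by fun_prop)
      (fun q hq => ⟨mem_Ici.2 (le_of_lt hq.1), mem_univ _⟩)
  have h1 := hasDerivAt_param (F := fun s r => u s (x + r)) (F' := fun s r => bt f ν u s (x + r))
    (a := 0) (b := ℓ) ht (sh h.cu) (sh h.ct) (fun s hs r => h.u_t hs (x + r))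
  have ct := cslice h.ct ht.le
  have h2 : ∫ r in (0:ℝ)..ℓ, bt f ν u t (x + r) = bg f ν u t (x + ℓ) - bg f ν u t x := by
    rw [intervalIntegral.integral_comp_add_left, add_zero,
      intervalIntegral.integral_eq_sub_of_hasDerivAt (fun y _ => h.bg_x ht.le y)
      (ct.intervalIntegrable _ _)]
  rw [← h2]
  exact h1

noncomputable def psi (f : ℝ → ℝ) (y : ℝ) : ℝ := 2 * prim f y - y * f y

noncomputable def bQ (f : ℝ → ℝ) (a b : ℝ) : ℝ := f a * b - f b * a + psi f a - psi f b

lemma bQ_bound (hf : ContDiff ℝ (⊤ : ℕ∞) f) {D L a b : ℝ}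
    (hL : ∀ y, |y| ≤ D → |deriv f y| ≤ L) (ha : |a| ≤ D) (hb : |b| ≤ D) :
    |bQ f a b| ≤ 2 * L * (b - a) ^ 2 := by
  have hsub : ∀ y ∈ uIcc a b, |y| ≤ D := by
    intro y hy
    have : uIcc a b ⊆ Icc (-D) D := uIcc_subset_Icc (abs_le.1 ha) (abs_le.1 hb)
    exact abs_le.2 (this hy)
  have hL0 : 0 ≤ L := (abs_nonneg _).trans (hL a ha)
  have hfa : ∀ y ∈ uIcc a b, |f y - f a| ≤ L * |y - a| := by
    intro y hy
    have := (convex_uIcc a b).norm_image_sub_le_of_norm_hasDerivWithin_le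
      (f := f) (f' := deriv f) (C := L) (fun z _ => (f_deriv hf z).hasDerivWithinAt)
      (fun z hz => hL z (hsub z hz)) left_mem_uIcc hy
    exact this
  have hd : ∀ y, HasDerivAt (bQ f a) ((y - a) * deriv f y - (f y - f a)) y := by
    intro y
    have h1 : HasDerivAt (fun b => f a * b) (f a * 1) y := (hasDerivAt_id y).const_mul _
    have h2 : HasDerivAt (fun b => f b * a) (deriv f y * a) y := (f_deriv hf y).mul_const a
    have h3 : HasDerivAt (psi f) (2 * f y - (1 * f y + y * deriv f y)) y :=
      ((prim_deriv hf.continuous y).const_mul 2).sub ((hasDerivAt_id y).mul (f_deriv hf y))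
    have h4 := ((h1.sub h2).add_const (psi f a)).sub h3
    exact h4.congr_deriv (by ring)
  have hma : ∀ y ∈ uIcc a b, |y - a| ≤ |b - a| := fun y hy => by
    have := abs_sub_left_of_mem_uIcc hy
    exact this
  have := (convex_uIcc a b).norm_image_sub_le_of_norm_hasDerivWithin_le
      (f := bQ f a) (f' := fun y => (y - a) * deriv f y - (f y - f a)) (C := 2 * L * |b - a|)
      (fun z _ => (hd z).hasDerivWithinAt) (fun z hz => by
        rw [Real.norm_eq_abs]
        refine (abs_sub _ _).trans ?_
        rw [abs_mul]
        have e1 := hL z (hsub z hz)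
        have e2 := hfa z hz
        have e3 := hma z hz
        have e4 : |z - a| * |deriv f z| ≤ |b - a| * L := by gcongr
        have e5 : L * |z - a| ≤ L * |b - a| := by gcongr
        linarith) left_mem_uIcc right_mem_uIcc
  have hQa : bQ f a a = 0 := by unfold bQ; ring
  rw [hQa, sub_zero, Real.norm_eq_abs, Real.norm_eq_abs, mul_assoc, ← sq, sq_abs] at this
  exact this

lemma psi_cont (hf : ContDiff ℝ (⊤ : ℕ∞) f) : Continuous (psi f) := by
  have h1 : Continuous (prim f) :=
    continuous_iff_continuousAt.2 fun y => (prim_deriv hf.continuous y).continuousAt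
  have h2 := hf.continuous
  unfold psi
  fun_prop

lemma IsBurgersSolution.flux_deriv (h : IsBurgersSolution f σ ν u) (ℓ : ℝ) {t : ℝ} (ht : 0 < t) :
    HasDerivAt (fun s => ∫ x in (0:ℝ)..1, u s x * bU u ℓ s x)
      (∫ x in (0:ℝ)..1, (bQ f (u t x) (u t (x + ℓ))
        - 2 * ν * ((u t (x + ℓ) - u t x) * bx u t x))) t := by
  have cgs : ContinuousOn (Function.uncurry fun s x => bg f ν u s (x + ℓ)) (Ici 0 ×ˢ univ) :=
    h.cg.comp (f := fun q : ℝ × ℝ => (q.1, q.2 + ℓ)) (by fun_prop)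
      (fun q hq => ⟨hq.1, mem_univ _⟩)
  have h1 := hasDerivAt_param (F := fun s x => u s x * bU u ℓ s x)
    (F' := fun s x => bt f ν u s x * bU u ℓ s x +
      u s x * (bg f ν u s (x + ℓ) - bg f ν u s x)) (a := 0) (b := 1) ht
    (mono_half (h.cu.mul (h.cU ℓ)))
    (mono_half ((h.ct.mul (h.cU ℓ)).add (h.cu.mul (cgs.sub h.cg))))
    (fun s hs x => (h.u_t hs x).mul (h.U_t ℓ hs x))
  convert h1 using 1
  have cu := cslice h.cu ht.le
  have cx := cslice h.cx ht.le
  have ct := cslice h.ct ht.le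
  have cg := cslice h.cg ht.le
  have cU := cslice (h.cU ℓ) ht.le
  have cf := h.hf.continuous
  have cp := psi_cont h.hf
  have cQ : Continuous fun x => bQ f (u t x) (u t (x + ℓ)) := by
    unfold bQ
    fun_prop
  have hz : ∫ x in (0:ℝ)..1, ((bt f ν u t x * bU u ℓ t x +
      u t x * (bg f ν u t (x + ℓ) - bg f ν u t x)) - (bQ f (u t x) (u t (x + ℓ))
        - 2 * ν * ((u t (x + ℓ) - u t x) * bx u t x)) -
      (psi f (u t (x + ℓ)) - psi f (u t x))) = 0 := by
    refine int_deriv_zero (H := fun x => bg f ν u t x * bU u ℓ t x +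
      ν * (u t x * u t (x + ℓ) - u t x * u t x)) ?_ (by fun_prop) ?_
    · intro x
      have d1 := h.u_x ht.le x
      have d2 : HasDerivAt (fun x => u t (x + ℓ)) (bx u t (x + ℓ)) x :=
        (h.u_x ht.le (x + ℓ)).comp_add_const x ℓ
      have d3 := ((h.bg_x ht.le x).mul (h.U_x ℓ ht.le x)).add
        (((d1.mul d2).sub (d1.mul d1)).const_mul ν)
      refine d3.congr_deriv ?_
      unfold bQ bg
      ring
    · have e1 := h.hper t 0
      have e2 := bg_per (f := f) (ν := ν) h.hper t 0
      have e3 : bU u ℓ t (0 + 1) = bU u ℓ t 0 := by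
        unfold bU
        congr 1
        funext r
        rw [← h.hper t (0 + r)]
        congr 1
        ring
      have e4 : u t (1 + ℓ) = u t (0 + ℓ) := by
        rw [← h.hper t (0 + ℓ)]
        congr 1
        ring
      rw [zero_add] at e1 e2 e3
      simp only [e1, e2, e3, e4]
  have hpp : Function.Periodic (fun x => psi f (u t x)) 1 := fun x => by simp only [h.hper]
  have hs := shift_int hpp ℓ
  rw [intervalIntegral.integral_sub (Continuous.intervalIntegrable (by fun_prop) _ _)
    (Continuous.intervalIntegrable (by fun_prop) _ _),
    intervalIntegral.integral_sub (Continuous.intervalIntegrable (by fun_prop) _ _)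
    (Continuous.intervalIntegrable (by fun_prop) _ _),
    intervalIntegral.integral_sub (f := fun x => psi f (u t (x + ℓ)))
    (g := fun x => psi f (u t x)) (Continuous.intervalIntegrable (by fun_prop) _ _)
    (Continuous.intervalIntegrable (by fun_prop) _ _)] at hz
  linarith

lemma IsBurgersSolution.flux_bound (h : IsBurgersSolution f σ ν u) {Ct L ℓ θ T₁ T₂ : ℝ}
    (hCt : ∀ t, 0 ≤ t → ν * ∫ x in (0:ℝ)..1, bx u t x ^ 2 ≤ Ct)
    (hL : ∀ y, |y| ≤ burgersD u → |deriv f y| ≤ L) (hθ : 0 < θ) (hT₁ : 0 < T₁) (hT : T₁ < T₂) :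
    (∫ x in (0:ℝ)..1, u T₁ x * bU u ℓ T₁ x) - (∫ x in (0:ℝ)..1, u T₂ x * bU u ℓ T₂ x) ≤
      (2 * L + ν / θ) * (∫ t in T₁..T₂, ∫ x in (0:ℝ)..1,
        (u (max t 0) (x + ℓ) - u (max t 0) x) ^ 2) + θ * Ct * (T₂ - T₁) := by
  have hν := h.hν
  set s2 : ℝ → ℝ := fun t => ∫ x in (0:ℝ)..1, (u (max t 0) (x + ℓ) - u (max t 0) x) ^ 2 with hs2
  have c0 := cont_ext h.cu
  have cs2 : Continuous s2 := by
    refine stAvg_cont_inner (h := fun t x => (u (max t 0) (x + ℓ) - u (max t 0) x) ^ 2) ?_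
    have c1 : Continuous (fun q : ℝ × ℝ => u (max q.1 0) (q.2 + ℓ)) :=
      c0.comp (by fun_prop : Continuous fun q : ℝ × ℝ => (q.1, q.2 + ℓ))
    exact (c1.sub c0).pow 2
  have cE : ContinuousOn (fun s => ∫ x in (0:ℝ)..1, u s x * bU u ℓ s x) (Ici 0) :=
    cont_int (G := fun s x => u s x * bU u ℓ s x) (h.cu.mul (h.cU ℓ)) 0 1
  have key := intervalIntegral.sub_le_integral_of_hasDeriv_right_of_le
    (g := fun s => -(∫ x in (0:ℝ)..1, u s x * bU u ℓ s x))
    (g' := fun t => -(∫ x in (0:ℝ)..1, (bQ f (u t x) (u t (x + ℓ))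
        - 2 * ν * ((u t (x + ℓ) - u t x) * bx u t x))))
    (φ := fun t => (2 * L + ν / θ) * s2 t + θ * Ct) hT.le
    ((cE.mono (fun s hs => hT₁.le.trans hs.1)).neg)
    (fun t ht => (h.flux_deriv ℓ (hT₁.trans ht.1)).neg.hasDerivWithinAt)
    (Continuous.integrableOn_Icc (by fun_prop)) ?_
  · rw [intervalIntegral.integral_add (Continuous.intervalIntegrable (by fun_prop) _ _)
      (Continuous.intervalIntegrable (by fun_prop) _ _),
      intervalIntegral.integral_const_mul, intervalIntegral.integral_const] at key
    simp only [smul_eq_mul] at key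
    linarith
  · intro t ht
    have ht0 : 0 < t := hT₁.trans ht.1
    have cu := cslice h.cu ht0.le
    have cx := cslice h.cx ht0.le
    have cf := h.hf.continuous
    have cp := psi_cont h.hf
    have cQ : Continuous fun x => bQ f (u t x) (u t (x + ℓ)) := by
      unfold bQ
      fun_prop
    have e1 : s2 t = ∫ x in (0:ℝ)..1, (u t (x + ℓ) - u t x) ^ 2 := by
      simp only [hs2, max_eq_left ht0.le]
    have e2 : ∫ x in (0:ℝ)..1, -(bQ f (u t x) (u t (x + ℓ))
        - 2 * ν * ((u t (x + ℓ) - u t x) * bx u t x)) ≤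
        ∫ x in (0:ℝ)..1, ((2 * L + ν / θ) * (u t (x + ℓ) - u t x) ^ 2 +
          θ * ν * bx u t x ^ 2) := by
      refine intervalIntegral.integral_mono_on zero_le_one
        (Continuous.intervalIntegrable (by fun_prop) _ _)
        (Continuous.intervalIntegrable (by fun_prop) _ _) ?_
      intro x _
      have q := bQ_bound h.hf hL (h.abs_le_D ht0.le x) (h.abs_le_D ht0.le (x + ℓ))
      have q1 := (abs_le.1 q).1
      set d := u t (x + ℓ) - u t x
      set b := bx u t x
      have q2 : 2 * (d * b) ≤ 1 / θ * d ^ 2 + θ * b ^ 2 := by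
        have : 0 ≤ 1 / θ * (d - θ * b) ^ 2 := by positivity
        have e : 1 / θ * (d - θ * b) ^ 2 = 1 / θ * d ^ 2 + θ * b ^ 2 - 2 * (d * b) := by
          field_simp
          ring
        linarith
      have q3 := mul_le_mul_of_nonneg_left q2 hν.le
      have q4 : ν * (1 / θ * d ^ 2 + θ * b ^ 2) = ν / θ * d ^ 2 + θ * ν * b ^ 2 := by ring
      linarith
    rw [intervalIntegral.integral_neg] at e2
    rw [intervalIntegral.integral_add (Continuous.intervalIntegrable (by fun_prop) _ _)
      (Continuous.intervalIntegrable (by fun_prop) _ _),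
      intervalIntegral.integral_const_mul, intervalIntegral.integral_const_mul, ← e1] at e2
    have e3 := mul_le_mul_of_nonneg_left (hCt t ht0.le) hθ.le
    linarith

lemma IsBurgersSolution.flux_close (h : IsBurgersSolution f σ ν u) {ℓ t : ℝ} (hℓ : 0 ≤ ℓ)
    (ht : 0 ≤ t) :
    |(∫ x in (0:ℝ)..1, u t x * bU u ℓ t x) - ℓ * ∫ x in (0:ℝ)..1, u t x ^ 2| ≤
      2 * (burgersD u) ^ 2 * ℓ ^ 2 := by
  have hD := h.D_pos
  set D := burgersD u with hDd
  have cu := cslice h.cu ht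
  have cU := cslice (h.cU ℓ) ht
  have hU0 : ∫ x in (0:ℝ)..1, bU u ℓ t x = 0 := by
    unfold bU
    have cc : Continuous (Function.uncurry fun x r => u t (x + r)) := by
      unfold Function.uncurry
      fun_prop
    rw [intervalIntegral_intervalIntegral_swap]
    · have e : ∀ r, ∫ x in (0:ℝ)..1, u t (x + r) = 0 := fun r => by
        rw [shift_int (h.hper t) r, h.mean' ht]
      simp [e]
    · exact (cc.continuousOn.integrableOn_compact
        (isCompact_uIcc.prod isCompact_uIcc)).mono_set
        (prod_mono uIoc_subset_uIcc uIoc_subset_uIcc)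
  have hw : ∀ x, bU u ℓ t x - ℓ * u t x ≤ D * ℓ ^ 2 := by
    intro x
    have h1 : bU u ℓ t x ≤ ∫ r in (0:ℝ)..ℓ, (u t x + D * ℓ) := by
      refine intervalIntegral.integral_mono_on hℓ
        (Continuous.intervalIntegrable (by fun_prop) _ _)
        (Continuous.intervalIntegrable (by fun_prop) _ _) ?_
      intro r hr
      have := h.incr_le ht (fun x => h.bx_le_D ht x) (x := x) (y := x + r) (by linarith [hr.1])
      have h3 : D * r ≤ D * ℓ := by gcongr; exact hr.2
      rw [← hDd] at this
      linarith
    rw [intervalIntegral.integral_const, smul_eq_mul] at h1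
    nlinarith
  have hmean := h.mean' ht
  have e0 : ∀ c : ℝ, (∫ x in (0:ℝ)..1, u t x * bU u ℓ t x) - ℓ * (∫ x in (0:ℝ)..1, u t x ^ 2) =
      ∫ x in (0:ℝ)..1, (u t x + c) * (bU u ℓ t x - ℓ * u t x) := by
    intro c
    have e1 : ∀ x, (u t x + c) * (bU u ℓ t x - ℓ * u t x) =
      (u t x * bU u ℓ t x - ℓ * u t x ^ 2) + (c * bU u ℓ t x - c * ℓ * u t x) := by
      intro x; ring
    simp_rw [e1]
    rw [intervalIntegral.integral_add (Continuous.intervalIntegrable (by fun_prop) _ _)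
      (Continuous.intervalIntegrable (by fun_prop) _ _),
      intervalIntegral.integral_sub (Continuous.intervalIntegrable (by fun_prop) _ _)
      (Continuous.intervalIntegrable (by fun_prop) _ _),
      intervalIntegral.integral_sub (Continuous.intervalIntegrable (by fun_prop) _ _)
      (Continuous.intervalIntegrable (by fun_prop) _ _),
      intervalIntegral.integral_const_mul, intervalIntegral.integral_const_mul,
      intervalIntegral.integral_const_mul, hU0, hmean]
    ring
  have hb : ∀ x, -D ≤ u t x ∧ u t x ≤ D := fun x => abs_le.1 (h.abs_le_D ht x)
  have hc2 : ∫ x in (0:ℝ)..1, (2 * D ^ 2 * ℓ ^ 2) = 2 * D ^ 2 * ℓ ^ 2 := by simp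
  rw [abs_le]
  constructor
  · rw [e0 (-D)]
    have : ∫ x in (0:ℝ)..1, -(2 * D ^ 2 * ℓ ^ 2) ≤
        ∫ x in (0:ℝ)..1, (u t x + -D) * (bU u ℓ t x - ℓ * u t x) := by
      refine intervalIntegral.integral_mono_on zero_le_one
        (Continuous.intervalIntegrable (by fun_prop) _ _)
        (Continuous.intervalIntegrable (by fun_prop) _ _) ?_
      intro x _
      have h1 := hw x
      obtain ⟨h2, h3⟩ := hb x
      have h4 : (D - u t x) * (bU u ℓ t x - ℓ * u t x) ≤ (D - u t x) * (D * ℓ ^ 2) :=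
        mul_le_mul_of_nonneg_left h1 (by linarith)
      have h5 : (D - u t x) * (D * ℓ ^ 2) ≤ (2 * D) * (D * ℓ ^ 2) :=
        mul_le_mul_of_nonneg_right (by linarith) (by positivity)
      nlinarith
    rw [intervalIntegral.integral_neg, hc2] at this
    exact this
  · rw [e0 D, ← hc2]
    refine intervalIntegral.integral_mono_on zero_le_one
      (Continuous.intervalIntegrable (by fun_prop) _ _)
      (Continuous.intervalIntegrable (by fun_prop) _ _) ?_
    intro x _
    have h1 := hw x
    obtain ⟨h2, h3⟩ := hb x
    have h4 : (u t x + D) * (bU u ℓ t x - ℓ * u t x) ≤ (u t x + D) * (D * ℓ ^ 2) :=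
      mul_le_mul_of_nonneg_left h1 (by linarith)
    have h5 : (u t x + D) * (D * ℓ ^ 2) ≤ (2 * D) * (D * ℓ ^ 2) :=
      mul_le_mul_of_nonneg_right (by linarith) (by positivity)
    nlinarith

end energy

/-! ### Assembly -/

section assembly

variable {f : ℝ → ℝ} {σ ν : ℝ} {u : ℝ → ℝ → ℝ}

/-- The increment, extended to negative times by freezing. -/
def incr (u : ℝ → ℝ → ℝ) (ℓ t x : ℝ) : ℝ := u (max t 0) (x + ℓ) - u (max t 0) x

lemma IsBurgersSolution.incr_cont (h : IsBurgersSolution f σ ν u) (ℓ : ℝ) :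
    Continuous (Function.uncurry (incr u ℓ)) := by
  have c0 := cont_ext h.cu
  have c1 : Continuous (fun q : ℝ × ℝ => u (max q.1 0) (q.2 + ℓ)) :=
    c0.comp (by fun_prop : Continuous fun q : ℝ × ℝ => (q.1, q.2 + ℓ))
  exact c1.sub c0

lemma structFun_eq {T₁ T₂ : ℝ} (hT₁ : 0 ≤ T₁) (hT : T₁ ≤ T₂) (p ℓ : ℝ) :
    structFun T₁ T₂ u p ℓ = stAvg T₁ T₂ (fun t x => |incr u ℓ t x| ^ p) := by
  unfold structFun timeAvg stAvg
  congr 1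
  refine intervalIntegral.integral_congr ?_
  intro t ht
  rw [uIcc_of_le hT] at ht
  simp only [incr, max_eq_left (hT₁.trans ht.1)]
  rw [intervalIntegral.integral_of_le zero_le_one]

lemma IsBurgersSolution.avg_incr (h : IsBurgersSolution f σ ν u) (T₁ T₂ ℓ : ℝ) :
    stAvg T₁ T₂ (incr u ℓ) = 0 := by
  unfold stAvg
  have e : ∀ t, ∫ x in (0:ℝ)..1, incr u ℓ t x = 0 := by
    intro t
    have cu := cslice h.cu (le_max_right t 0)
    unfold incr
    rw [intervalIntegral.integral_sub (Continuous.intervalIntegrable (by fun_prop) _ _)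
      (Continuous.intervalIntegrable (by fun_prop) _ _), shift_int (h.hper _), sub_self]
  simp [e]

/-- Lower bound for the second moment. -/
lemma IsBurgersSolution.second_moment (h : IsBurgersSolution f σ ν u) {Ct L ℓ : ℝ}
    (hCt0 : 0 < Ct)
    (hCt : ∀ t, 0 ≤ t → ν * ∫ x in (0:ℝ)..1, bx u t x ^ 2 ≤ Ct)
    (hL : ∀ y, |y| ≤ burgersD u → |deriv f y| ≤ L)
    {D T₁ T₂ β : ℝ} (hD : burgersD u = D)
    (hT₁ : T₁ = burgersT₁ D Ct) (hT₂ : T₂ = burgersT₂ σ D Ct)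
    (hβ : β = (D ^ 2)⁻¹ / (16 * Ct * (T₂ - T₁)))
    (hℓ : 0 < ℓ) (hℓ2 : ℓ ≤ 1 / (32 * D ^ 4)) :
    (D ^ 2)⁻¹ / 16 * ℓ ≤ (2 * L + ν / (β * ℓ)) * (T₂ - T₁) *
      stAvg T₁ T₂ (fun t x => incr u ℓ t x ^ 2) := by
  have hDp : 0 < D := hD ▸ h.D_pos
  have hσ := h.hσ
  have hT₁p : 0 < T₁ := by rw [hT₁]; unfold burgersT₁; positivity
  have hT₂a : 3 / 2 * T₁ ≤ T₂ := by rw [hT₁, hT₂]; exact le_max_left _ _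
  have hT₂b : 2 * D * σ⁻¹ ≤ T₂ := by rw [hT₂]; exact le_max_right _ _
  have hT : T₁ < T₂ := by linarith
  have hΔ : 0 < T₂ - T₁ := by linarith
  have hβp : 0 < β := by rw [hβ]; positivity
  have e1 : (D ^ 2)⁻¹ / 2 ≤ ∫ x in (0:ℝ)..1, u T₁ x ^ 2 := by
    have h1 := h.energy_lower hCt hT₁p.le
    have h2 := h.energy_init
    rw [hD] at h2
    have h3 : 2 * Ct * T₁ = (D ^ 2)⁻¹ / 2 := by
      rw [hT₁]; unfold burgersT₁; field_simp; norm_num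
    linarith
  have e2 : ∫ x in (0:ℝ)..1, u T₂ x ^ 2 ≤ (D ^ 2)⁻¹ / 4 := by
    have hT₂0 : 0 ≤ T₂ := by linarith
    have hb : ∀ x, bx u T₂ x ≤ 1 / (2 * D) := by
      intro x
      rcases le_or_gt (bx u T₂ x) 0 with h1 | h1
      · exact h1.trans (by positivity)
      have h2 := h.bx_le_inv hT₂0 x
      have h3 : 2 * D ≤ σ * T₂ := by
        have := mul_le_mul_of_nonneg_left hT₂b hσ.le
        have e : σ * (2 * D * σ⁻¹) = 2 * D := by field_simp
        linarith
      rw [le_div_iff₀ (by positivity)]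
      have := mul_le_mul_of_nonneg_right h3 h1.le
      linarith
    have hc := cslice h.cu hT₂0
    have : ∫ x in (0:ℝ)..1, u T₂ x ^ 2 ≤ ∫ x in (0:ℝ)..1, (D ^ 2)⁻¹ / 4 := by
      refine intervalIntegral.integral_mono_on zero_le_one
        (Continuous.intervalIntegrable (by fun_prop) _ _)
        (Continuous.intervalIntegrable (by fun_prop) _ _) ?_
      intro x _
      have h1 := h.abs_le_of hT₂0 hb x
      have h2 := pow_le_pow_left₀ (abs_nonneg _) h1 2
      rw [sq_abs] at h2
      refine h2.trans (le_of_eq ?_)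
      field_simp
      norm_num
    simpa using this
  have f1 := abs_le.1 (h.flux_close hℓ.le hT₁p.le)
  have f2 := abs_le.1 (h.flux_close hℓ.le (hT₁p.trans hT).le)
  rw [hD] at f1 f2
  have f3 := h.flux_bound (ℓ := ℓ) hCt hL (mul_pos hβp hℓ) hT₁p hT
  have g1 : β * ℓ * Ct * (T₂ - T₁) = (D ^ 2)⁻¹ / 16 * ℓ := by
    rw [hβ]; field_simp
  have g2 : (T₂ - T₁) * stAvg T₁ T₂ (fun t x => incr u ℓ t x ^ 2) =
      ∫ t in T₁..T₂, ∫ x in (0:ℝ)..1, (u (max t 0) (x + ℓ) - u (max t 0) x) ^ 2 := by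
    unfold stAvg incr
    rw [← mul_assoc, mul_inv_cancel₀ hΔ.ne', one_mul]
  rw [← g2] at f3
  have g3 : 4 * D ^ 2 * ℓ ^ 2 ≤ (D ^ 2)⁻¹ / 8 * ℓ := by
    have : 4 * D ^ 2 * ℓ ≤ 4 * D ^ 2 * (1 / (32 * D ^ 4)) := by gcongr
    have e : 4 * D ^ 2 * (1 / (32 * D ^ 4)) = (D ^ 2)⁻¹ / 8 := by field_simp; norm_num
    nlinarith
  have g4 := mul_le_mul_of_nonneg_left e1 hℓ.le
  have g5 := mul_le_mul_of_nonneg_left e2 hℓ.le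
  have := f1.1
  have := f2.2
  linarith

end assembly

set_option maxHeartbeats 2000000 in
/-- There exist `ν₀ ∈ (0,1]`, `C₁ > 0`, `C₂ ∈ (C₁ν₀,1)` and, for
each `p ≥ 0`, constants `c(p), C(p) > 0` such that for every `ν ∈ (0,ν₀]`: for
`ℓ` in the inertial range `(C₁ν, C₂]`, `S_p(ℓ) ∼ ℓ^p` if `0 ≤ p ≤ 1` and
`S_p(ℓ) ∼ ℓ` if `p ≥ 1`; and for `ℓ` in the dissipation range `(0, C₁ν]`,
`S_p(ℓ) ∼ ℓ^p` if `0 ≤ p ≤ 1` and `S_p(ℓ) ∼ ℓ^p ν^{-(p-1)}` if `p ≥ 1`. -/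
theorem statement18 (f : ℝ → ℝ) (σ D Ct : ℝ) (hCt : 0 < Ct)
    (hCtb : ∀ ν, 0 < ν → ν ≤ 1 →
      ∀ u : ℝ → ℝ → ℝ, IsBurgersSolution f σ ν u → burgersD u = D →
        ∀ t, 0 ≤ t → sobLp 1 2 (u t) ^ 2 ≤ Ct * ν⁻¹) :
    ∃ ν₀ C₁ C₂ : ℝ, (0 < ν₀ ∧ ν₀ ≤ 1) ∧ 0 < C₁ ∧ (C₁ * ν₀ < C₂ ∧ C₂ < 1) ∧
      ∀ p : ℝ, 0 ≤ p → ∃ c > 0, ∃ C > 0,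
        ∀ ν, 0 < ν → ν ≤ ν₀ →
          ∀ u : ℝ → ℝ → ℝ, IsBurgersSolution f σ ν u → burgersD u = D →
            (∀ ℓ, C₁ * ν < ℓ → ℓ ≤ C₂ →
              (p ≤ 1 →
                c * ℓ ^ p
                  ≤ structFun (burgersT₁ D Ct) (burgersT₂ σ D Ct) u p ℓ ∧
                structFun (burgersT₁ D Ct) (burgersT₂ σ D Ct) u p ℓ
                  ≤ C * ℓ ^ p) ∧
              (1 ≤ p →
                c * ℓ ≤ structFun (burgersT₁ D Ct) (burgersT₂ σ D Ct) u p ℓ ∧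
                structFun (burgersT₁ D Ct) (burgersT₂ σ D Ct) u p ℓ ≤ C * ℓ)) ∧
            (∀ ℓ, 0 < ℓ → ℓ ≤ C₁ * ν →
              (p ≤ 1 →
                c * ℓ ^ p
                  ≤ structFun (burgersT₁ D Ct) (burgersT₂ σ D Ct) u p ℓ ∧
                structFun (burgersT₁ D Ct) (burgersT₂ σ D Ct) u p ℓ
                  ≤ C * ℓ ^ p) ∧
              (1 ≤ p →
                c * (ℓ ^ p * ν ^ (-(p - 1)))
                  ≤ structFun (burgersT₁ D Ct) (burgersT₂ σ D Ct) u p ℓ ∧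
                structFun (burgersT₁ D Ct) (burgersT₂ σ D Ct) u p ℓ
                  ≤ C * (ℓ ^ p * ν ^ (-(p - 1))))) := by
  by_cases hex : ∃ ν, 0 < ν ∧ ν ≤ 1 ∧ ∃ u : ℝ → ℝ → ℝ, IsBurgersSolution f σ ν u ∧ burgersD u = D
  swap
  · refine ⟨1 / 4, 1, 1 / 2, by norm_num, by norm_num, by norm_num, ?_⟩
    intro p _
    refine ⟨1, one_pos, 1, one_pos, ?_⟩
    intro ν hν hν1 u hu huD
    exact absurd ⟨ν, hν, by linarith, u, hu, huD⟩ hex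
  obtain ⟨ν', _, _, u', hu', huD'⟩ := hex
  have hD : 0 < D := huD' ▸ hu'.D_pos
  have hf := hu'.hf
  have hσ := hu'.hσ
  -- bounds for `f` and `f'` on `[-D, D]`
  obtain ⟨F, hF⟩ := (isCompact_Icc (a := -D) (b := D)).exists_bound_of_continuousOn
    hf.continuous.continuousOn
  obtain ⟨L, hL⟩ := (isCompact_Icc (a := -D) (b := D)).exists_bound_of_continuousOn
    (f_smooth1 hf).continuous.continuousOn
  have hF0 : 0 ≤ F := (norm_nonneg _).trans (hF 0 ⟨by linarith, hD.le⟩)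
  have hL0 : 0 ≤ L := (norm_nonneg _).trans (hL 0 ⟨by linarith, hD.le⟩)
  set T₁ := burgersT₁ D Ct with hT₁
  set T₂ := burgersT₂ σ D Ct with hT₂
  have hT₁p : 0 < T₁ := by rw [hT₁]; unfold burgersT₁; positivity
  have hT₂a : 3 / 2 * T₁ ≤ T₂ := le_max_left _ _
  have hT : T₁ < T₂ := by linarith
  have hΔ : 0 < T₂ - T₁ := by linarith
  obtain ⟨β, hβ⟩ : ∃ β, β = (D ^ 2)⁻¹ / (16 * Ct * (T₂ - T₁)) := ⟨_, rfl⟩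
  have hβp : 0 < β := by rw [hβ]; positivity
  obtain ⟨K, hK⟩ : ∃ K, K = D + 2 * F := ⟨_, rfl⟩
  have hKp : 0 < K := by rw [hK]; positivity
  obtain ⟨c1, hc1⟩ : ∃ c1, c1 = (D ^ 2)⁻¹ / 16 / ((2 * L + 1 / β) * (T₂ - T₁)) := ⟨_, rfl⟩
  have hc1p : 0 < c1 := by rw [hc1]; positivity
  obtain ⟨κ, hκ⟩ : ∃ κ, κ = min (c1 / (2 * D)) (c1 / K) := ⟨_, rfl⟩
  have hκp : 0 < κ := by rw [hκ]; exact lt_min (by positivity) (by positivity)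
  obtain ⟨C₂, hC₂⟩ : ∃ C₂, C₂ = min (1 / 2) (1 / (32 * D ^ 4)) := ⟨_, rfl⟩
  have hC₂p : 0 < C₂ := by rw [hC₂]; exact lt_min (by positivity) (by positivity)
  have hC₂1 : C₂ ≤ 1 / 2 := by rw [hC₂]; exact min_le_left _ _
  have hC₂2 : C₂ ≤ 1 / (32 * D ^ 4) := by rw [hC₂]; exact min_le_right _ _
  refine ⟨C₂ / 2, 1, C₂, ⟨by linarith, by linarith⟩, one_pos, ⟨by linarith, by linarith⟩, ?_⟩
  intro p hp
  obtain ⟨c, hc, C, hC, hcore⟩ := core_bounds (p := p) hD hκp hp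
  have hm1 : 0 < (2 * D) ^ (p - 1) := by positivity
  have hm2 : 0 < K ^ (p - 1) := by positivity
  refine ⟨min c (min (c * (2 * D) ^ (p - 1)) (c * K ^ (p - 1))),
    lt_min hc (lt_min (by positivity) (by positivity)),
    max C (max (C * (2 * D) ^ (p - 1)) (C * K ^ (p - 1))), lt_max_of_lt_left hC, ?_⟩
  set c' := min c (min (c * (2 * D) ^ (p - 1)) (c * K ^ (p - 1)))
  set C' := max C (max (C * (2 * D) ^ (p - 1)) (C * K ^ (p - 1)))
  have hc'1 : c' ≤ c := min_le_left _ _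
  have hc'2 : c' ≤ c * (2 * D) ^ (p - 1) := (min_le_right _ _).trans (min_le_left _ _)
  have hc'3 : c' ≤ c * K ^ (p - 1) := (min_le_right _ _).trans (min_le_right _ _)
  have hC'1 : C ≤ C' := le_max_left _ _
  have hC'2 : C * (2 * D) ^ (p - 1) ≤ C' := (le_max_left _ _).trans (le_max_right _ _)
  have hC'3 : C * K ^ (p - 1) ≤ C' := (le_max_right _ _).trans (le_max_right _ _)
  intro ν hν hνle u hu huD
  have hν1 : ν ≤ 1 := by linarith
  have hLu : ∀ y, |y| ≤ burgersD u → |deriv f y| ≤ L := fun y hy => by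
    rw [huD] at hy; exact hL y (abs_le.1 hy)
  have hFu : ∀ y, |y| ≤ burgersD u → |f y| ≤ F := fun y hy => by
    rw [huD] at hy; exact hF y (abs_le.1 hy)
  have hCtu : ∀ t, 0 ≤ t → ν * ∫ x in (0:ℝ)..1, bx u t x ^ 2 ≤ Ct := by
    intro t ht
    have h1 := hCtb ν hν hν1 u hu huD t ht
    rw [hu.sob_two_eq ht] at h1
    have h2 := mul_le_mul_of_nonneg_left h1 hν.le
    have h3 : ν * (Ct * ν⁻¹) = Ct := by field_simp
    linarith
  -- facts on the increments
  have hup : ∀ ℓ, 0 < ℓ → ∀ t ∈ Icc T₁ T₂, ∀ x, incr u ℓ t x ≤ D * ℓ := by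
    intro ℓ hℓ t ht x
    have h0 : 0 ≤ max t 0 := le_max_right _ _
    have := hu.incr_le h0 (fun x => hu.bx_le_D h0 x) (x := x) (y := x + ℓ) (by linarith)
    rw [huD] at this
    unfold incr
    linarith
  have habs1 : ∀ ℓ, ∀ t ∈ Icc T₁ T₂, ∀ x, |incr u ℓ t x| ≤ 2 * D := by
    intro ℓ t ht x
    have h0 : 0 ≤ max t 0 := le_max_right _ _
    have h1 := hu.abs_le_D h0 x
    have h2 := hu.abs_le_D h0 (x + ℓ)
    rw [huD] at h1 h2
    unfold incr
    exact (abs_sub _ _).trans (by linarith)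
  have habs2 : ∀ ℓ, 0 < ℓ → ∀ t ∈ Icc T₁ T₂, ∀ x, |incr u ℓ t x| ≤ K * ℓ / ν := by
    intro ℓ hℓ t ht x
    have h0 : 0 ≤ max t 0 := le_max_right _ _
    have h1 := convex_univ.norm_image_sub_le_of_norm_hasDerivWithin_le
      (f := u (max t 0)) (f' := bx u (max t 0)) (C := K / ν)
      (fun z _ => (hu.u_x h0 z).hasDerivWithinAt) (fun z _ => by
        have := hu.bx_abs_le hν1 hFu h0 z
        rw [huD, ← hK] at this
        rw [Real.norm_eq_abs, le_div_iff₀ hν]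
        linarith) (mem_univ x) (mem_univ (x + ℓ))
    rw [Real.norm_eq_abs, Real.norm_eq_abs, add_sub_cancel_left, abs_of_pos hℓ] at h1
    unfold incr
    refine h1.trans (le_of_eq ?_)
    ring
  have hsec : ∀ ℓ, 0 < ℓ → ℓ ≤ C₂ → (D ^ 2)⁻¹ / 16 * ℓ ≤ (2 * L + ν / (β * ℓ)) * (T₂ - T₁) *
      stAvg T₁ T₂ (fun t x => incr u ℓ t x ^ 2) := fun ℓ hℓ hℓ2 =>
    hu.second_moment hCt hCtu hLu huD hT₁ hT₂ hβ hℓ (hℓ2.trans hC₂2)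
  have hS2nn : ∀ ℓ, 0 ≤ stAvg T₁ T₂ (fun t x => incr u ℓ t x ^ 2) := by
    intro ℓ
    have h1 : Continuous (Function.uncurry fun t x => incr u ℓ t x ^ 2) :=
      (hu.incr_cont ℓ).pow 2
    have h2 := stAvg_mono hT (h := fun _ _ => 0) continuous_const h1
      (fun t _ x => sq_nonneg (incr u ℓ t x))
    rwa [stAvg_const hT] at h2
  have hc1e : c1 * ((2 * L + 1 / β) * (T₂ - T₁)) = (D ^ 2)⁻¹ / 16 := by
    rw [hc1]
    exact div_mul_cancel₀ _ (by positivity)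
  have hGp : 0 < (2 * L + 1 / β) * (T₂ - T₁) := by positivity
  constructor
  · intro ℓ hℓ1 hℓ2
    rw [one_mul] at hℓ1
    have hℓ : 0 < ℓ := hν.trans hℓ1
    rw [structFun_eq hT₁p.le hT.le]
    have hmom : κ * ℓ * (2 * D) ≤ stAvg T₁ T₂ (fun t x => incr u ℓ t x ^ 2) := by
      have h1 := hsec ℓ hℓ hℓ2
      set S2 := stAvg T₁ T₂ (fun t x => incr u ℓ t x ^ 2)
      have h2 : ν / (β * ℓ) ≤ 1 / β := by
        rw [div_le_div_iff₀ (by positivity) hβp]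
        have := mul_le_mul_of_nonneg_left hℓ1.le hβp.le
        linarith
      have h3 : (2 * L + ν / (β * ℓ)) * (T₂ - T₁) * S2 ≤
          (2 * L + 1 / β) * (T₂ - T₁) * S2 := by
        have := hS2nn ℓ
        gcongr
      have h4 : c1 * ℓ ≤ S2 := by
        refine le_of_mul_le_mul_left ?_ hGp
        calc _ = c1 * ((2 * L + 1 / β) * (T₂ - T₁)) * ℓ := by ring
          _ ≤ _ := by rw [hc1e]; exact h1.trans h3
      have h5 : κ * (2 * D) ≤ c1 := by
        have : κ ≤ c1 / (2 * D) := by rw [hκ]; exact min_le_left _ _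
        rwa [le_div_iff₀ (by positivity)] at this
      have h6 := mul_le_mul_of_nonneg_right h5 hℓ.le
      linarith
    obtain ⟨r1, r2⟩ := hcore T₁ T₂ hT (incr u ℓ) (hu.incr_cont ℓ) ℓ (2 * D) hℓ (by positivity)
      (hup ℓ hℓ) (habs1 ℓ) (hu.avg_incr _ _ ℓ) hmom
    constructor
    · intro hp1
      obtain ⟨q1, q2⟩ := r1 hp1
      have hpos : 0 < ℓ ^ p := by positivity
      exact ⟨(mul_le_mul_of_nonneg_right hc'1 hpos.le).trans q1,
        q2.trans (mul_le_mul_of_nonneg_right hC'1 hpos.le)⟩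
    · intro hp1
      obtain ⟨q1, q2⟩ := r2 hp1
      have w1 := mul_le_mul_of_nonneg_right hc'2 hℓ.le
      have w2 := mul_le_mul_of_nonneg_right hC'2 hℓ.le
      constructor <;> linarith
  · intro ℓ hℓ hℓ1
    rw [one_mul] at hℓ1
    have hℓ2 : ℓ ≤ C₂ := by linarith
    rw [structFun_eq hT₁p.le hT.le]
    have hmom : κ * ℓ * (K * ℓ / ν) ≤ stAvg T₁ T₂ (fun t x => incr u ℓ t x ^ 2) := by
      have h1 := hsec ℓ hℓ hℓ2
      set S2 := stAvg T₁ T₂ (fun t x => incr u ℓ t x ^ 2)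
      have hr : 1 ≤ ν / ℓ := by rwa [one_le_div hℓ]
      have h2 : 2 * L + ν / (β * ℓ) ≤ (2 * L + 1 / β) * (ν / ℓ) := by
        have e : (2 * L + 1 / β) * (ν / ℓ) = 2 * L * (ν / ℓ) + ν / (β * ℓ) := by
          field_simp
        rw [e]
        have : 2 * L * 1 ≤ 2 * L * (ν / ℓ) := mul_le_mul_of_nonneg_left hr (by positivity)
        linarith
      have h3 : (2 * L + ν / (β * ℓ)) * (T₂ - T₁) * S2 ≤
          (2 * L + 1 / β) * (ν / ℓ) * (T₂ - T₁) * S2 := by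
        have := hS2nn ℓ
        gcongr
      have h4 : c1 * ℓ ≤ (ν / ℓ) * S2 := by
        refine le_of_mul_le_mul_left ?_ hGp
        calc _ = c1 * ((2 * L + 1 / β) * (T₂ - T₁)) * ℓ := by ring
          _ ≤ _ := by rw [hc1e]; linarith
      have h5 : κ * K ≤ c1 := by
        have : κ ≤ c1 / K := by rw [hκ]; exact min_le_right _ _
        rwa [le_div_iff₀ (by positivity)] at this
      have h6 := mul_le_mul_of_nonneg_right h5 hℓ.le
      have h7 : κ * K * ℓ * (ℓ / ν) ≤ (ν / ℓ) * S2 * (ℓ / ν) :=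
        mul_le_mul_of_nonneg_right (h6.trans h4) (by positivity)
      have h8 : (ν / ℓ) * S2 * (ℓ / ν) = S2 := by field_simp
      have h9 : κ * ℓ * (K * ℓ / ν) = κ * K * ℓ * (ℓ / ν) := by ring
      linarith
    obtain ⟨r1, r2⟩ := hcore T₁ T₂ hT (incr u ℓ) (hu.incr_cont ℓ) ℓ (K * ℓ / ν) hℓ
      (by positivity) (hup ℓ hℓ) (habs2 ℓ hℓ) (hu.avg_incr _ _ ℓ) hmom
    constructor
    · intro hp1
      obtain ⟨q1, q2⟩ := r1 hp1
      have hpos : 0 < ℓ ^ p := by positivity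
      exact ⟨(mul_le_mul_of_nonneg_right hc'1 hpos.le).trans q1,
        q2.trans (mul_le_mul_of_nonneg_right hC'1 hpos.le)⟩
    · intro hp1
      obtain ⟨q1, q2⟩ := r2 hp1
      have e : ℓ * (K * ℓ / ν) ^ (p - 1) = K ^ (p - 1) * (ℓ ^ p * ν ^ (-(p - 1))) := by
        rw [Real.div_rpow (by positivity) hν.le, Real.mul_rpow hKp.le hℓ.le,
          Real.rpow_neg hν.le, Real.rpow_sub_one hℓ.ne']
        field_simp
      rw [e] at q1 q2
      have hpos : 0 < ℓ ^ p * ν ^ (-(p - 1)) := by positivity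
      have w1 := mul_le_mul_of_nonneg_right hc'3 hpos.le
      have w2 := mul_le_mul_of_nonneg_right hC'3 hpos.le
      constructor <;> linarith
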